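/- arXiv:0708.3938 — 8 statements merged into one kernel-verified Lean document; each statement's English description precedes it below -/
import Mathlib

section
/- Let Q ⊂ ℝ² be the union of the two closed triangles with vertices A₁ = (0,0), B₁ = (1,2), C₁ = (2,0) and A₂ = (3/2, 1), B₂ = (5/2, −1), C₂ = (7/2, 1) respectively, and let X = {(x₁, x₂, x₃) : (x₁, x₂) ∈ Q, 0 ≤ x₃ ≤ 1} ⊂ ℝ³. Let a¹ = (0, 1, 0) and a² = (1, 0, 0). Then R_c(X) is proximinal in C(X). -/
open Matrix Set Filter Topology

/-- `p 0, p 1, ..., p (m-1)` is a (finite) path whose first difference is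
perpendicular to `a1`, with differences alternately perpendicular to `a1` and `a2`,
and all differences nonzero. -/
def IsPathFrom {n : ℕ} (a1 a2 : Fin n → ℝ) (m : ℕ) (p : ℕ → Fin n → ℝ) : Prop :=
  ∀ i, i + 1 < m →
    p (i + 1) - p i ≠ 0 ∧
    (i % 2 = 0 → a1 ⬝ᵥ (p (i + 1) - p i) = 0) ∧
    (i % 2 = 1 → a2 ⬝ᵥ (p (i + 1) - p i) = 0)

/-- A finite path with respect to the directions `a1` and `a2` (the alternation may
start with either direction). -/
def IsPath {n : ℕ} (a1 a2 : Fin n → ℝ) (m : ℕ) (p : ℕ → Fin n → ℝ) : Prop :=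
  IsPathFrom a1 a2 m p ∨ IsPathFrom a2 a1 m p

/-- A finite path of length `m` (i.e. with `m` points) all of whose points lie in `X`. -/
def IsPathIn {n : ℕ} (a1 a2 : Fin n → ℝ) (X : Set (Fin n → ℝ)) (m : ℕ)
    (p : ℕ → Fin n → ℝ) : Prop :=
  1 ≤ m ∧ IsPath a1 a2 m p ∧ ∀ i < m, p i ∈ X

/-- An irreducible path in `X`: no strictly shorter path in `X` joins its endpoints. -/
def IsIrreduciblePathIn {n : ℕ} (a1 a2 : Fin n → ℝ) (X : Set (Fin n → ℝ)) (m : ℕ)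
    (p : ℕ → Fin n → ℝ) : Prop :=
  IsPathIn a1 a2 X m p ∧
  ¬ ∃ l q, l < m ∧ IsPathIn a1 a2 X l q ∧ q 0 = p 0 ∧ q (l - 1) = p (m - 1)

/-- An infinite path whose first difference is perpendicular to `a1`. -/
def IsInfPathFrom {n : ℕ} (a1 a2 : Fin n → ℝ) (p : ℕ → Fin n → ℝ) : Prop :=
  ∀ i,
    p (i + 1) - p i ≠ 0 ∧
    (i % 2 = 0 → a1 ⬝ᵥ (p (i + 1) - p i) = 0) ∧
    (i % 2 = 1 → a2 ⬝ᵥ (p (i + 1) - p i) = 0)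

/-- An infinite path with respect to the directions `a1` and `a2`. -/
def IsInfPath {n : ℕ} (a1 a2 : Fin n → ℝ) (p : ℕ → Fin n → ℝ) : Prop :=
  IsInfPathFrom a1 a2 p ∨ IsInfPathFrom a2 a1 p

/-- `f` is bounded on `X`. -/
def BddOn {n : ℕ} (f : (Fin n → ℝ) → ℝ) (X : Set (Fin n → ℝ)) : Prop :=
  ∃ M, ∀ x ∈ X, |f x| ≤ M

/-- `R_a(X)`: sums of two ridge functions with directions `a1, a2` that are bounded on `X`
(the individual summands need not be bounded). -/
def RaSet {n : ℕ} (a1 a2 : Fin n → ℝ) (X : Set (Fin n → ℝ)) : Set ((Fin n → ℝ) → ℝ) :=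
  {f | (∃ g1 g2 : ℝ → ℝ, ∀ x ∈ X, f x = g1 (a1 ⬝ᵥ x) + g2 (a2 ⬝ᵥ x)) ∧ BddOn f X}

/-- `R_b(X)`: sums of two ridge functions with directions `a1, a2` whose summands are
bounded on `X`. -/
def RbSet {n : ℕ} (a1 a2 : Fin n → ℝ) (X : Set (Fin n → ℝ)) : Set ((Fin n → ℝ) → ℝ) :=
  {f | ∃ g1 g2 : ℝ → ℝ, (∀ x ∈ X, f x = g1 (a1 ⬝ᵥ x) + g2 (a2 ⬝ᵥ x)) ∧
    BddOn (fun x => g1 (a1 ⬝ᵥ x)) X ∧ BddOn (fun x => g2 (a2 ⬝ᵥ x)) X}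

/-- `R_c(X)`: sums of two ridge functions with directions `a1, a2` whose summands are
continuous on `X`. -/
def RcSet {n : ℕ} (a1 a2 : Fin n → ℝ) (X : Set (Fin n → ℝ)) : Set ((Fin n → ℝ) → ℝ) :=
  {f | ∃ g1 g2 : ℝ → ℝ, (∀ x ∈ X, f x = g1 (a1 ⬝ᵥ x) + g2 (a2 ⬝ᵥ x)) ∧
    ContinuousOn (fun x => g1 (a1 ⬝ᵥ x)) X ∧ ContinuousOn (fun x => g2 (a2 ⬝ᵥ x)) X}

/-- The uniform (sup) distance of `f` and `g` over `X`. -/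
noncomputable def supDist {n : ℕ} (X : Set (Fin n → ℝ)) (f g : (Fin n → ℝ) → ℝ) : ℝ :=
  sSup {r | ∃ x ∈ X, r = |f x - g x|}

/-- `f` has an extremal element (best approximation in the sup norm over `X`) in `S`. -/
def HasExtremalIn {n : ℕ} (X : Set (Fin n → ℝ)) (f : (Fin n → ℝ) → ℝ)
    (S : Set ((Fin n → ℝ) → ℝ)) : Prop :=
  ∃ g0 ∈ S, supDist X f g0 = sInf ((supDist X f) '' S)

/-- The orbit of `t`: all points of `X` joined to `t` by a common path lying in `X`. -/
def Orbit {n : ℕ} (a1 a2 : Fin n → ℝ) (X : Set (Fin n → ℝ)) (t : Fin n → ℝ) :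
    Set (Fin n → ℝ) :=
  {y | ∃ m p, IsPathIn a1 a2 X m p ∧ (∃ i < m, p i = t) ∧ (∃ j < m, p j = y)}

/-- The variation of `f` on a set `Y`. -/
noncomputable def varOn {n : ℕ} (f : (Fin n → ℝ) → ℝ) (Y : Set (Fin n → ℝ)) : ℝ :=
  sSup {r | ∃ x ∈ Y, ∃ y ∈ Y, r = |f x - f y|}

/-- The planar set `Q`: the union of the closed triangles `A₁B₁C₁` and `A₂B₂C₂`. -/
noncomputable def Qset : Set (Fin 2 → ℝ) :=
  convexHull ℝ {![(0 : ℝ), 0], ![(1 : ℝ), 2], ![(2 : ℝ), 0]} ∪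
  convexHull ℝ {![(3 / 2 : ℝ), 1], ![(5 / 2 : ℝ), -1], ![(7 / 2 : ℝ), 1]}

/-- Inequality description of the planar set `Q`. -/
def QQ (x y : ℝ) : Prop :=
  (0 ≤ y ∧ y ≤ 2 * x ∧ 2 * x + y ≤ 4) ∨ (y ≤ 1 ∧ 4 ≤ 2 * x + y ∧ 2 * x - 6 ≤ y)

/-- Admissible moves of the `y` coordinate. -/
def Move (y y' : ℝ) : Prop :=
  (1 < y ∧ 1 ≤ y' ∧ y' ≤ 2) ∨ (y < 0 ∧ -1 ≤ y' ∧ y' ≤ 0) ∨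
    ((0 ≤ y ∧ y ≤ 1) ∧ (0 ≤ y' ∧ y' ≤ 1))

lemma tri_mem {s : Set (Fin 2 → ℝ)} (hs : Convex ℝ s) {p q r : Fin 2 → ℝ} (hp : p ∈ s)
    (hq : q ∈ s) (hr : r ∈ s) {a b c : ℝ} (ha : 0 ≤ a) (hb : 0 ≤ b) (hc : 0 ≤ c)
    (h : a + b + c = 1) : a • p + b • q + c • r ∈ s := by
  have := hs.sum_mem (t := Finset.univ) (w := ![a, b, c]) (z := ![p, q, r])
    (by intro i _; fin_cases i <;> simpa)
    (by simp [Fin.sum_univ_three, h]) (by intro i _; fin_cases i <;> simpa)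
  simpa [Fin.sum_univ_three] using this

lemma mem_Qset (x y : ℝ) : ![x, y] ∈ Qset ↔ QQ x y := by
  unfold Qset QQ
  constructor
  · rintro (h | h)
    · left
      have hc : Convex ℝ {p : Fin 2 → ℝ | 0 ≤ p 1 ∧ p 1 ≤ 2 * p 0 ∧ 2 * p 0 + p 1 ≤ 4} := by
        rintro p ⟨h1, h2, h3⟩ q ⟨k1, k2, k3⟩ a b ha hb hab
        simp only [Set.mem_setOf_eq, Pi.add_apply, Pi.smul_apply, smul_eq_mul]
        refine ⟨by positivity, by nlinarith, ?_⟩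
        have : b = 1 - a := by linarith
        subst this
        nlinarith
      have := convexHull_min (t := {p : Fin 2 → ℝ | 0 ≤ p 1 ∧ p 1 ≤ 2 * p 0 ∧ 2 * p 0 + p 1 ≤ 4})
        (by rintro p (rfl | rfl | rfl) <;> norm_num) hc h
      simpa using this
    · right
      have hc : Convex ℝ {p : Fin 2 → ℝ | p 1 ≤ 1 ∧ 4 ≤ 2 * p 0 + p 1 ∧ 2 * p 0 - 6 ≤ p 1} := by
        rintro p ⟨h1, h2, h3⟩ q ⟨k1, k2, k3⟩ a b ha hb hab
        simp only [Set.mem_setOf_eq, Pi.add_apply, Pi.smul_apply, smul_eq_mul]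
        have : b = 1 - a := by linarith
        subst this
        refine ⟨by nlinarith, by nlinarith, by nlinarith⟩
      have := convexHull_min (t := {p : Fin 2 → ℝ | p 1 ≤ 1 ∧ 4 ≤ 2 * p 0 + p 1 ∧ 2 * p 0 - 6 ≤ p 1})
        (by rintro p (rfl | rfl | rfl) <;> norm_num) hc h
      simpa using this
  · rintro (⟨h1, h2, h3⟩ | ⟨h1, h2, h3⟩)
    · left
      have := tri_mem (convex_convexHull ℝ {![(0 : ℝ), 0], ![(1 : ℝ), 2], ![(2 : ℝ), 0]})
        (subset_convexHull ℝ _ (by simp : ![(0 : ℝ), 0] ∈ _))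
        (subset_convexHull ℝ _ (by simp : ![(1 : ℝ), 2] ∈ _))
        (subset_convexHull ℝ _ (by simp : ![(2 : ℝ), 0] ∈ _))
        (a := (4 - y - 2 * x) / 4) (b := y / 2) (c := (x - y / 2) / 2)
        (by linarith) (by linarith) (by linarith) (by ring)
      convert this using 1
      ext i; fin_cases i <;> simp <;> ring
    · right
      have := tri_mem (convex_convexHull ℝ {![(3 / 2 : ℝ), 1], ![(5 / 2 : ℝ), -1], ![(7 / 2 : ℝ), 1]})
        (subset_convexHull ℝ _ (by simp : ![(3 / 2 : ℝ), 1] ∈ _))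
        (subset_convexHull ℝ _ (by simp : ![(5 / 2 : ℝ), -1] ∈ _))
        (subset_convexHull ℝ _ (by simp : ![(7 / 2 : ℝ), 1] ∈ _))
        (a := (6 + y - 2 * x) / 4) (b := (1 - y) / 2) (c := (2 * x + y - 4) / 4)
        (by linarith) (by linarith) (by linarith) (by ring)
      convert this using 1
      ext i; fin_cases i <;> simp <;> ring

lemma QQ.bounds {x y : ℝ} (h : QQ x y) : 0 ≤ x ∧ x ≤ 7 / 2 ∧ -1 ≤ y ∧ y ≤ 2 := by
  rcases h with ⟨h1, h2, h3⟩ | ⟨h1, h2, h3⟩ <;> refine ⟨?_, ?_, ?_, ?_⟩ <;> linarith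

lemma exists_x {y : ℝ} (h : -1 ≤ y ∧ y ≤ 2) : ∃ x, QQ x y ∧ QQ x 0 := by
  unfold QQ
  rcases le_total 0 y with h0 | h0
  · exact ⟨1, Or.inl (by constructor <;> [skip; constructor] <;> linarith), Or.inl (by norm_num)⟩
  · exact ⟨5 / 2, Or.inr (by constructor <;> [skip; constructor] <;> linarith),
      Or.inr (by norm_num)⟩

lemma exists_y {x : ℝ} (h : 0 ≤ x ∧ x ≤ 7 / 2) : ∃ y, QQ x y := by
  unfold QQ
  rcases le_total x 3 with h0 | h0
  · refine ⟨0, ?_⟩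
    rcases le_total x 2 with h1 | h1
    · exact Or.inl (by constructor <;> [skip; constructor] <;> linarith)
    · exact Or.inr (by constructor <;> [skip; constructor] <;> linarith)
  · exact ⟨1, Or.inr (by constructor <;> [skip; constructor] <;> linarith)⟩

lemma clampd (t lo hi d : ℝ) (h : lo ≤ hi) (h1 : lo - d ≤ t) (h2 : t ≤ hi + d) (hd : 0 ≤ d) :
    ∃ s, lo ≤ s ∧ s ≤ hi ∧ |t - s| ≤ d ∧ (lo ≤ t → t ≤ hi → s = t) := by
  refine ⟨max lo (min hi t), le_max_left _ _, max_le h (min_le_left _ _), ?_, ?_⟩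
  · rw [abs_le]
    rcases le_total hi t with h3 | h3
    · rw [min_eq_left h3, max_eq_right h]; constructor <;> linarith
    · rw [min_eq_right h3]
      rcases le_total lo t with h4 | h4
      · rw [max_eq_right h4]; constructor <;> linarith
      · rw [max_eq_left h4]; constructor <;> linarith
  · intro h3 h4
    rw [min_eq_right h4, max_eq_right h3]

lemma QQ_hi {x y : ℝ} (h : 1 < y) : QQ x y ↔ (y ≤ 2 * x ∧ 2 * x + y ≤ 4) := by
  unfold QQ
  constructor
  · rintro (⟨h1, h2, h3⟩ | ⟨h1, h2, h3⟩) <;> constructor <;> linarith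
  · rintro ⟨h1, h2⟩; left; exact ⟨by linarith, h1, h2⟩

lemma QQ_lo {x y : ℝ} (h : y < 0) : QQ x y ↔ (4 ≤ 2 * x + y ∧ 2 * x - 6 ≤ y) := by
  unfold QQ
  constructor
  · rintro (⟨h1, h2, h3⟩ | ⟨h1, h2, h3⟩) <;> constructor <;> linarith
  · rintro ⟨h1, h2⟩; right; exact ⟨by linarith, h1, h2⟩

lemma QQ_mid {x y : ℝ} (h : 0 ≤ y) (h' : y ≤ 1) : QQ x y ↔ (y ≤ 2 * x ∧ 2 * x - 6 ≤ y) := by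
  unfold QQ
  constructor
  · rintro (⟨h1, h2, h3⟩ | ⟨h1, h2, h3⟩) <;> constructor <;> linarith
  · rintro ⟨h1, h2⟩
    rcases le_total (2 * x + y) 4 with h3 | h3
    · left; exact ⟨h, h1, h3⟩
    · right; exact ⟨h', h3, h2⟩

lemma QQ_T1 {x y : ℝ} (h1 : 0 ≤ y) (h2 : y ≤ 2 * x) (h3 : 2 * x + y ≤ 4) : QQ x y :=
  Or.inl ⟨h1, h2, h3⟩

lemma QQ_T2 {x y : ℝ} (h1 : y ≤ 1) (h2 : 4 ≤ 2 * x + y) (h3 : 2 * x - 6 ≤ y) : QQ x y :=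
  Or.inr ⟨h1, h2, h3⟩

lemma move_y {x y y' y'' : ℝ} (h : QQ x y) (h' : QQ x y') (hm : Move y' y'') :
    ∃ x'', |x - x''| ≤ |y' - y''| ∧ QQ x'' y ∧ QQ x'' y'' := by
  have habs1 := le_abs_self (y' - y'')
  have habs2 := neg_abs_le (y' - y'')
  have habs0 := abs_nonneg (y' - y'')
  rcases hm with ⟨a, b, c⟩ | ⟨a, b, c⟩ | ⟨⟨a, b⟩, ⟨c, d⟩⟩
  · rw [QQ_hi a] at h'
    obtain ⟨s, s1, s2, s3, s4⟩ := clampd x (y'' / 2) (2 - y'' / 2) |y' - y''| (by linarith)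
      (by linarith) (by linarith) habs0
    refine ⟨s, s3, ?_, QQ_T1 (by linarith) (by linarith) (by linarith)⟩
    rcases lt_or_ge 1 y with hy | hy
    · by_cases hyy : y ≤ y''
      · exact QQ_T1 (by linarith) (by linarith) (by linarith)
      · have h0 := (QQ_hi hy).1 h
        rw [s4 (by linarith) (by linarith)]; exact h
    · rcases lt_or_ge y 0 with hy0 | hy0
      · have h0 := (QQ_lo hy0).1 h
        linarith
      · exact (QQ_mid hy0 hy).2 ⟨by linarith, by linarith⟩
  · rw [QQ_lo a] at h'
    obtain ⟨s, s1, s2, s3, s4⟩ := clampd x (2 - y'' / 2) (3 + y'' / 2) |y' - y''| (by linarith)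
      (by linarith) (by linarith) habs0
    refine ⟨s, s3, ?_, QQ_T2 (by linarith) (by linarith) (by linarith)⟩
    rcases lt_or_ge 1 y with hy | hy
    · have h0 := (QQ_hi hy).1 h
      linarith
    · rcases lt_or_ge y 0 with hy0 | hy0
      · by_cases hyy : y'' ≤ y
        · exact QQ_T2 (by linarith) (by linarith) (by linarith)
        · have h0 := (QQ_lo hy0).1 h
          rw [s4 (by linarith) (by linarith)]; exact h
      · exact (QQ_mid hy0 hy).2 ⟨by linarith, by linarith⟩
  · rw [QQ_mid a b] at h'
    rcases lt_or_ge 1 y with hy | hy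
    · have h0 := (QQ_hi hy).1 h
      exact ⟨x, by simp, h, (QQ_mid c d).2 ⟨by linarith, by linarith⟩⟩
    · rcases lt_or_ge y 0 with hy0 | hy0
      · have h0 := (QQ_lo hy0).1 h
        exact ⟨x, by simp, h, (QQ_mid c d).2 ⟨by linarith, by linarith⟩⟩
      · have h0 := (QQ_mid hy0 hy).1 h
        rcases le_total y y'' with hyy | hyy
        · obtain ⟨s, s1, s2, s3, s4⟩ := clampd x (y'' / 2) (3 + y / 2) |y' - y''| (by linarith)
            (by linarith) (by linarith) habs0
          exact ⟨s, s3, (QQ_mid hy0 hy).2 ⟨by linarith, by linarith⟩,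
            (QQ_mid c d).2 ⟨by linarith, by linarith⟩⟩
        · obtain ⟨s, s1, s2, s3, s4⟩ := clampd x (y / 2) (3 + y'' / 2) |y' - y''| (by linarith)
            (by linarith) (by linarith) habs0
          exact ⟨s, s3, (QQ_mid hy0 hy).2 ⟨by linarith, by linarith⟩,
            (QQ_mid c d).2 ⟨by linarith, by linarith⟩⟩

lemma QQ_fiber (x y : ℝ) : QQ x y ↔
    (max (min 0 (4 - 2 * x)) (2 * x - 6) ≤ y ∧ y ≤ min (2 * x) (max (4 - 2 * x) 1) ∧
      0 ≤ x ∧ x ≤ 7 / 2) := by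
  unfold QQ
  simp only [max_le_iff, min_le_iff, le_min_iff, le_max_iff]
  grind

lemma move_x {x y x' : ℝ} (h : QQ x y) (h1 : 0 ≤ x') (h2 : x' ≤ 7 / 2) :
    ∃ y', |y - y'| ≤ 2 * |x - x'| ∧ QQ x' y' := by
  have habs1 := le_abs_self (x - x')
  have habs2 := neg_abs_le (x - x')
  have habs0 := abs_nonneg (x - x')
  rw [QQ_fiber] at h
  obtain ⟨a, b, c, d⟩ := h
  obtain ⟨y0, hy0⟩ := exists_y ⟨h1, h2⟩
  rw [QQ_fiber] at hy0
  obtain ⟨s, s1, s2, s3, -⟩ := clampd y (max (min 0 (4 - 2 * x')) (2 * x' - 6))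
    (min (2 * x') (max (4 - 2 * x') 1)) (2 * |x - x'|) (hy0.1.trans hy0.2.1)
    (by
      refine le_trans ?_ a
      rw [sub_le_iff_le_add]
      refine max_le ?_ ?_
      · rcases min_le_iff.1 (le_refl (min 0 (4 - 2 * x))) with h | h
        · have := le_max_left (min 0 (4 - 2 * x)) (2 * x - 6)
          have := min_le_left 0 (4 - 2 * x')
          linarith
        · have := le_max_left (min 0 (4 - 2 * x)) (2 * x - 6)
          have := min_le_right 0 (4 - 2 * x')
          linarith
      · have := le_max_right (min 0 (4 - 2 * x)) (2 * x - 6)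
        linarith)
    (by
      refine le_trans b ?_
      rw [← sub_le_iff_le_add]
      refine le_min ?_ ?_
      · have := min_le_left (2 * x) (max (4 - 2 * x) 1)
        linarith
      · rcases le_max_iff.1 (le_refl (max (4 - 2 * x) 1)) with h | h
        · have := min_le_right (2 * x) (max (4 - 2 * x) 1)
          have := le_max_left (4 - 2 * x') 1
          linarith
        · have := min_le_right (2 * x) (max (4 - 2 * x) 1)
          have := le_max_right (4 - 2 * x') 1
          linarith) (by positivity)
  exact ⟨s, s3, (QQ_fiber _ _).2 ⟨s1, s2, h1, h2⟩⟩

/-- One-step regularisation. -/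
lemma regularize (F : ℝ → ℝ → ℝ → ℝ) (M E B : ℝ) (v : ℝ → ℝ)
    (hM : ∀ x y z, QQ x y → z ∈ Icc (0 : ℝ) 1 → |F x y z| ≤ M)
    (hU : ∀ ε > 0, ∃ δ > 0, ∀ x y z x' y', QQ x y → QQ x' y' → z ∈ Icc (0 : ℝ) 1 →
      |x - x'| < δ → |y - y'| < δ → |F x y z - F x' y' z| ≤ ε)
    (hB : ∀ y, -1 ≤ y ∧ y ≤ 2 → |v y| ≤ B)
    (hv : ∀ x y z y' z', QQ x y → QQ x y' → z ∈ Icc (0 : ℝ) 1 → z' ∈ Icc (0 : ℝ) 1 →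
      v y' - v y ≤ F x y' z' - F x y z + 2 * E) :
    ∃ w : ℝ → ℝ, (∀ y, -1 ≤ y ∧ y ≤ 2 → v y ≤ w y) ∧
      (∀ x y z y' z', QQ x y → QQ x y' → z ∈ Icc (0 : ℝ) 1 → z' ∈ Icc (0 : ℝ) 1 →
        w y' - v y ≤ F x y' z' - F x y z + 2 * E) ∧
      (∀ ε > 0, ∃ δ > 0, ∀ y' y'', -1 ≤ y' ∧ y' ≤ 2 → Move y' y'' → |y' - y''| < δ →
        w y'' ≤ w y' + ε) ∧
      (∃ B', ∀ y, -1 ≤ y ∧ y ≤ 2 → |w y| ≤ B') := by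
  set I : ℝ → Set ℝ := fun y' => {r | ∃ x y z z', QQ x y ∧ QQ x y' ∧ z ∈ Icc (0 : ℝ) 1 ∧
    z' ∈ Icc (0 : ℝ) 1 ∧ r = v y + (F x y' z' - F x y z + 2 * E)} with hI
  have hz0 : (0 : ℝ) ∈ Icc (0 : ℝ) 1 := by simp
  have hbdd : ∀ y, BddBelow (I y) := by
    intro y
    refine ⟨v y, ?_⟩
    rintro r ⟨x, y1, z, z', h1, h2, h3, h4, rfl⟩
    have := hv x y1 z y z' h1 h2 h3 h4
    linarith
  have hne : ∀ y, -1 ≤ y ∧ y ≤ 2 → (I y).Nonempty := by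
    intro y hy
    obtain ⟨x, hx, -⟩ := exists_x hy
    exact ⟨_, x, y, 0, 0, hx, hx, hz0, hz0, rfl⟩
  have p1 : ∀ y, -1 ≤ y ∧ y ≤ 2 → v y ≤ sInf (I y) := by
    intro y hy
    refine le_csInf (hne y hy) ?_
    rintro r ⟨x, y1, z, z', h1, h2, h3, h4, rfl⟩
    have := hv x y1 z y z' h1 h2 h3 h4
    linarith
  have p2 : ∀ x y z y' z', QQ x y → QQ x y' → z ∈ Icc (0 : ℝ) 1 → z' ∈ Icc (0 : ℝ) 1 →
        sInf (I y') - v y ≤ F x y' z' - F x y z + 2 * E := by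
    intro x y z y' z' h1 h2 h3 h4
    have := csInf_le (hbdd y') ⟨x, y, z, z', h1, h2, h3, h4, rfl⟩
    linarith
  refine ⟨fun y => sInf (I y), p1, p2, ?_, ?_⟩
  · intro ε hε
    obtain ⟨δ, hδ, H⟩ := hU (ε / 2) (by linarith)
    refine ⟨δ, hδ, ?_⟩
    intro y' y'' hy' hm hd
    rw [← sub_le_iff_le_add]
    refine le_csInf (hne y' hy') ?_
    rintro r ⟨x, y, z, z', h1, h2, h3, h4, rfl⟩
    obtain ⟨x'', k1, k2, k3⟩ := move_y h1 h2 hm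
    have e0 := p2 x'' y z y'' z' k2 k3 h3 h4
    have e1 := H x y z x'' y h1 k2 h3 (by linarith) (by simpa using hδ)
    have e2 := H x y' z' x'' y'' h2 k3 h4 (by linarith) hd
    rw [abs_le] at e1 e2
    show sInf (I y'') - ε ≤ _
    linarith [e1.1, e1.2, e2.1, e2.2]
  · refine ⟨B + 2 * |E|, ?_⟩
    intro y hy
    obtain ⟨x, hx, -⟩ := exists_x hy
    have e1 := p1 y hy
    have e2 := p2 x y 0 y 0 hx hx hz0 hz0
    have e3 := abs_le.1 (hB y hy)
    show |sInf (I y)| ≤ _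
    rw [abs_le]
    have := le_abs_self E
    have := abs_nonneg E
    constructor <;> linarith [e3.1, e3.2]

lemma contOn_of_unif {s : Set ℝ} {g : ℝ → ℝ}
    (h : ∀ ε > 0, ∃ δ > 0, ∀ y ∈ s, ∀ y' ∈ s, |y - y'| < δ → g y ≤ g y' + ε) :
    ContinuousOn g s := by
  rw [Metric.continuousOn_iff]
  intro b hb ε hε
  obtain ⟨δ, hδ, H⟩ := h (ε / 2) (by linarith)
  refine ⟨δ, hδ, fun a ha hd => ?_⟩
  rw [Real.dist_eq] at *
  have e1 := H a ha b hb hd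
  have e2 := H b hb a ha (by rwa [abs_sub_comm])
  rw [abs_lt]; constructor <;> linarith

lemma core (F : ℝ → ℝ → ℝ → ℝ) (M E B : ℝ) (v : ℝ → ℝ)
    (hM : ∀ x y z, QQ x y → z ∈ Icc (0 : ℝ) 1 → |F x y z| ≤ M)
    (hU : ∀ ε > 0, ∃ δ > 0, ∀ x y z x' y', QQ x y → QQ x' y' → z ∈ Icc (0 : ℝ) 1 →
      |x - x'| < δ → |y - y'| < δ → |F x y z - F x' y' z| ≤ ε)
    (hB : ∀ y, -1 ≤ y ∧ y ≤ 2 → |v y| ≤ B)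
    (hv : ∀ x y z y' z', QQ x y → QQ x y' → z ∈ Icc (0 : ℝ) 1 → z' ∈ Icc (0 : ℝ) 1 →
      v y' - v y ≤ F x y' z' - F x y z + 2 * E) :
    ∃ g : ℝ → ℝ, ContinuousOn g (Icc (-1) 2) ∧
      (∀ x y z y' z', QQ x y → QQ x y' → z ∈ Icc (0 : ℝ) 1 → z' ∈ Icc (0 : ℝ) 1 →
        g y' - g y ≤ F x y' z' - F x y z + 2 * E) := by
  obtain ⟨w, w1, w2, w3, B', hB'⟩ := regularize F M E B v hM hU hB hv
  have hw : ∀ x y z y' z', QQ x y → QQ x y' → z ∈ Icc (0 : ℝ) 1 → z' ∈ Icc (0 : ℝ) 1 →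
      w y' - w y ≤ F x y' z' - F x y z + 2 * E := by
    intro x y z y' z' h1 h2 h3 h4
    have := w2 x y z y' z' h1 h2 h3 h4
    have := w1 y h1.bounds.2.2
    linarith
  obtain ⟨t, t1, t2, t3, -⟩ := regularize (fun x y z => - F x y z) M E B' (fun y => - w y)
    (by intro x y z h1 h2; rw [abs_neg]; exact hM x y z h1 h2)
    (by
      intro ε hε
      obtain ⟨δ, hδ, H⟩ := hU ε hε
      refine ⟨δ, hδ, fun x y z x' y' h1 h2 h3 h4 h5 => ?_⟩
      have := H x y z x' y' h1 h2 h3 h4 h5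
      rw [← abs_neg]
      convert this using 2
      ring)
    (by intro y hy; rw [abs_neg]; exact hB' y hy)
    (by
      intro x y z y' z' h1 h2 h3 h4
      have := hw x y' z' y z h2 h1 h4 h3
      linarith)
  set c : ℝ → ℝ := fun y => max 0 (min 1 y) with hc
  set g : ℝ → ℝ := fun y => max (- t y) (min (w y) (w (c y))) with hg
  have gl : ∀ y, - t y ≤ g y := fun y => le_max_left _ _
  have gu : ∀ y, -1 ≤ y ∧ y ≤ 2 → g y ≤ w y := fun y hy =>
    max_le (by have := t1 y hy; linarith) (min_le_left _ _)
  have c1 : ∀ y, 1 ≤ y → c y = 1 := by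
    intro y hy; simp [hc, min_eq_left hy]
  have c0 : ∀ y, y ≤ 0 → c y = 0 := by
    intro y hy; simp only [hc]; rw [min_eq_right (by linarith), max_eq_left hy]
  have cm : ∀ y, 0 ≤ y → y ≤ 1 → c y = y := by
    intro y hy hy'; simp only [hc]; rw [min_eq_right hy', max_eq_right hy]
  have gm : ∀ y, 0 ≤ y → y ≤ 1 → g y = w y := by
    intro y hy hy'
    simp only [hg, cm y hy hy', min_self]
    exact max_eq_right (by have := t1 y ⟨by linarith, by linarith⟩; linarith)
  have key : ∀ ε > 0, ∃ δ > 0, ∀ y' y'', -1 ≤ y' ∧ y' ≤ 2 → Move y' y'' → |y' - y''| < δ →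
        w y'' ≤ w y' + ε ∧ t y'' ≤ t y' + ε := by
    intro ε hε
    obtain ⟨δ, hδ, H⟩ := w3 ε hε
    obtain ⟨δ', hδ', H'⟩ := t3 ε hε
    refine ⟨min δ δ', lt_min hδ hδ', fun y' y'' h1 h2 h3 => ?_⟩
    exact ⟨H _ _ h1 h2 (h3.trans_le (min_le_left _ _)), H' _ _ h1 h2 (h3.trans_le (min_le_right _ _))⟩
  have side : ∀ ε a y y', w y ≤ w y' + ε → t y' ≤ t y + ε → 0 < ε →
      max (- t y) (min (w y) a) ≤ max (- t y') (min (w y') a) + ε := by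
    intro ε a y y' h1 h2 h3
    refine max_le ?_ ?_
    · have := le_max_left (- t y') (min (w y') a); linarith
    · have := le_max_right (- t y') (min (w y') a)
      have h4 : min (w y) a ≤ min (w y') a + ε := by
        rw [← sub_le_iff_le_add]
        refine le_min ?_ ?_
        · have := min_le_left (w y) a; linarith
        · have := min_le_right (w y) a; linarith
      linarith
  have C1 : ContinuousOn g (Icc 1 2) := by
    apply contOn_of_unif
    intro ε hε
    obtain ⟨δ, hδ, H⟩ := key ε hε
    refine ⟨δ, hδ, fun y hy y' hy' hd => ?_⟩
    have hd' : |y' - y| < δ := by rwa [abs_sub_comm]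
    have r1 := t1 1 (by norm_num)
    rcases hy.1.eq_or_lt with h1 | h1 <;> rcases hy'.1.eq_or_lt with h2 | h2
    · rw [← h1, ← h2]; linarith
    · subst h1
      have := (H y' 1 ⟨by linarith, hy'.2⟩ (Or.inl ⟨h2, by norm_num⟩) hd').1
      rw [gm 1 (by norm_num) le_rfl]
      have h5 : min (w y') (w (c y')) ≤ g y' := le_max_right _ _
      rw [c1 y' h2.le] at h5
      have : w 1 - ε ≤ min (w y') (w 1) := le_min (by linarith) (by linarith)
      linarith
    · subst h2
      have := (H y 1 ⟨by linarith, hy.2⟩ (Or.inl ⟨h1, by norm_num⟩) hd).2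
      rw [gm 1 (by norm_num) le_rfl]
      simp only [hg]
      rw [c1 y h1.le]
      refine max_le (by linarith) ((min_le_right _ _).trans (by linarith))
    · simp only [hg]
      rw [c1 y h1.le, c1 y' h2.le]
      exact side ε (w 1) y y'
        (H y' y ⟨by linarith, hy'.2⟩ (Or.inl ⟨h2, hy.1, hy.2⟩) hd').1
        (H y y' ⟨by linarith, hy.2⟩ (Or.inl ⟨h1, hy'.1, hy'.2⟩) hd).2 hε
  have C0 : ContinuousOn g (Icc (-1) 0) := by
    apply contOn_of_unif
    intro ε hε
    obtain ⟨δ, hδ, H⟩ := key ε hε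
    refine ⟨δ, hδ, fun y hy y' hy' hd => ?_⟩
    have hd' : |y' - y| < δ := by rwa [abs_sub_comm]
    have r1 := t1 0 (by norm_num)
    rcases hy.2.eq_or_lt with h1 | h1 <;> rcases hy'.2.eq_or_lt with h2 | h2
    · rw [h1, h2]; linarith
    · subst h1
      have := (H y' 0 ⟨hy'.1, by linarith⟩ (Or.inr (Or.inl ⟨h2, by norm_num⟩)) hd').1
      rw [gm 0 le_rfl (by norm_num)]
      have h5 : min (w y') (w (c y')) ≤ g y' := le_max_right _ _
      rw [c0 y' h2.le] at h5
      have : w 0 - ε ≤ min (w y') (w 0) := le_min (by linarith) (by linarith)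
      linarith
    · subst h2
      have := (H y 0 ⟨hy.1, by linarith⟩ (Or.inr (Or.inl ⟨h1, by norm_num⟩)) hd).2
      rw [gm 0 le_rfl (by norm_num)]
      simp only [hg]
      rw [c0 y h1.le]
      refine max_le (by linarith) ((min_le_right _ _).trans (by linarith))
    · simp only [hg]
      rw [c0 y h1.le, c0 y' h2.le]
      exact side ε (w 0) y y'
        (H y' y ⟨hy'.1, by linarith⟩ (Or.inr (Or.inl ⟨h2, hy.1, hy.2⟩)) hd').1
        (H y y' ⟨hy.1, by linarith⟩ (Or.inr (Or.inl ⟨h1, hy'.1, hy'.2⟩)) hd).2 hε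
  have Cm : ContinuousOn g (Icc 0 1) := by
    apply contOn_of_unif
    intro ε hε
    obtain ⟨δ, hδ, H⟩ := key ε hε
    refine ⟨δ, hδ, fun y hy y' hy' hd => ?_⟩
    have hd' : |y' - y| < δ := by rwa [abs_sub_comm]
    rw [gm y hy.1 hy.2, gm y' hy'.1 hy'.2]
    exact (H y' y ⟨by linarith [hy'.1], by linarith [hy'.2]⟩
      (Or.inr (Or.inr ⟨⟨hy'.1, hy'.2⟩, hy.1, hy.2⟩)) hd').1
  refine ⟨g, ?_, ?_⟩
  · have h1 := (C0.union_of_isClosed Cm isClosed_Icc isClosed_Icc).union_of_isClosed C1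
      (isClosed_Icc.union isClosed_Icc) isClosed_Icc
    rw [Icc_union_Icc_eq_Icc (by norm_num) (by norm_num),
      Icc_union_Icc_eq_Icc (by norm_num) (by norm_num)] at h1
    exact h1
  · intro x y z y' z' h1 h2 h3 h4
    have e1 := t2 x y' z' y z h2 h1 h4 h3
    have e2 := gl y
    have e3 := gu y' h2.bounds.2.2
    linarith

lemma core2 (F : ℝ → ℝ → ℝ → ℝ) (M E : ℝ) (g : ℝ → ℝ)
    (hM : ∀ x y z, QQ x y → z ∈ Icc (0 : ℝ) 1 → |F x y z| ≤ M)
    (hU : ∀ ε > 0, ∃ δ > 0, ∀ x y z x' y', QQ x y → QQ x' y' → z ∈ Icc (0 : ℝ) 1 →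
      |x - x'| < δ → |y - y'| < δ → |F x y z - F x' y' z| ≤ ε)
    (hgc : ContinuousOn g (Icc (-1) 2))
    (hg : ∀ x y z y' z', QQ x y → QQ x y' → z ∈ Icc (0 : ℝ) 1 → z' ∈ Icc (0 : ℝ) 1 →
        g y' - g y ≤ F x y' z' - F x y z + 2 * E) :
    ∃ u : ℝ → ℝ, ContinuousOn u (Icc 0 (7 / 2)) ∧
      (∀ x y z, QQ x y → z ∈ Icc (0 : ℝ) 1 → |F x y z - (g y + u x)| ≤ E) := by
  set I : ℝ → Set ℝ := fun x => {r | ∃ y z, QQ x y ∧ z ∈ Icc (0 : ℝ) 1 ∧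
    r = F x y z - E - g y} with hI
  have hz0 : (0 : ℝ) ∈ Icc (0 : ℝ) 1 := by simp
  have ub : ∀ x y z, QQ x y → z ∈ Icc (0 : ℝ) 1 → ∀ r ∈ I x, r ≤ F x y z + E - g y := by
    rintro x y z h1 h2 r ⟨y', z', h3, h4, rfl⟩
    have := hg x y' z' y z h3 h1 h4 h2
    linarith
  have hne : ∀ x, 0 ≤ x ∧ x ≤ 7 / 2 → (I x).Nonempty := by
    intro x hx
    obtain ⟨y, hy⟩ := exists_y hx
    exact ⟨_, y, 0, hy, hz0, rfl⟩
  have hbdd : ∀ x, 0 ≤ x ∧ x ≤ 7 / 2 → BddAbove (I x) := by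
    intro x hx
    obtain ⟨y, hy⟩ := exists_y hx
    exact ⟨_, ub x y 0 hy hz0⟩
  refine ⟨fun x => sSup (I x), ?_, ?_⟩
  · apply contOn_of_unif
    intro ε hε
    obtain ⟨δ, hδ, H⟩ := hU (ε / 2) (by linarith)
    have huc := isCompact_Icc.uniformContinuousOn_of_continuous hgc
    rw [Metric.uniformContinuousOn_iff] at huc
    obtain ⟨δ', hδ', H'⟩ := huc (ε / 2) (by linarith)
    refine ⟨min δ δ' / 2, by have := lt_min hδ hδ'; linarith, ?_⟩
    intro x hx x' hx' hd
    have m1 := min_le_left δ δ'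
    have m2 := min_le_right δ δ'
    refine csSup_le (hne x hx) ?_
    rintro r ⟨y, z, h1, h2, rfl⟩
    obtain ⟨y', k1, k2⟩ := move_x h1 hx'.1 hx'.2
    have e1 := H x y z x' y' h1 k2 h2 (by linarith [abs_nonneg (x - x')]) (by linarith)
    have e2 := H' y h1.bounds.2.2 y' k2.bounds.2.2 (by rw [Real.dist_eq]; linarith)
    rw [Real.dist_eq] at e2
    have e3 := le_csSup (hbdd x' hx') ⟨y', z, k2, h2, rfl⟩
    rw [abs_le] at e1
    rw [abs_lt] at e2
    linarith [e1.1, e1.2, e2.1, e2.2]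
  · intro x y z h1 h2
    have hx : 0 ≤ x ∧ x ≤ 7 / 2 := ⟨h1.bounds.1, h1.bounds.2.1⟩
    have e1 := csSup_le (hne x hx) (ub x y z h1 h2)
    have e2 := le_csSup (hbdd x hx) ⟨y, z, h1, h2, rfl⟩
    show |F x y z - (g y + sSup (I x))| ≤ E
    rw [abs_le]; constructor <;> linarith

lemma limit_exists (F : ℝ → ℝ → ℝ → ℝ) (M E : ℝ)
    (hM : ∀ x y z, QQ x y → z ∈ Icc (0 : ℝ) 1 → |F x y z| ≤ M)
    (h : ∀ n : ℕ, ∃ v u : ℝ → ℝ, ∀ x y z, QQ x y → z ∈ Icc (0 : ℝ) 1 →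
      |F x y z - (v y + u x)| ≤ E + 1 / ((n : ℝ) + 1)) :
    ∃ (v : ℝ → ℝ) (B : ℝ), (∀ y, -1 ≤ y ∧ y ≤ 2 → |v y| ≤ B) ∧
    (∀ x y z y' z', QQ x y → QQ x y' → z ∈ Icc (0 : ℝ) 1 → z' ∈ Icc (0 : ℝ) 1 →
      v y' - v y ≤ F x y' z' - F x y z + 2 * E) := by
  choose v u hvu using h
  have hz0 : (0 : ℝ) ∈ Icc (0 : ℝ) 1 := by simp
  have hd : ∀ n x y z y' z', QQ x y → QQ x y' → z ∈ Icc (0 : ℝ) 1 → z' ∈ Icc (0 : ℝ) 1 →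
      v n y' - v n y ≤ F x y' z' - F x y z + 2 * (E + 1 / ((n : ℝ) + 1)) := by
    intro n x y z y' z' h1 h2 h3 h4
    have e1 := abs_le.1 (hvu n x y z h1 h3)
    have e2 := abs_le.1 (hvu n x y' z' h2 h4)
    linarith [e1.1, e1.2, e2.1, e2.2]
  have hn1 : ∀ n : ℕ, 1 / ((n : ℝ) + 1) ≤ 1 := by
    intro n
    rw [div_le_one (by positivity)]
    have : (0 : ℝ) ≤ n := by positivity
    linarith
  have hbd : ∀ y, -1 ≤ y ∧ y ≤ 2 → ∀ n, v n y - v n 0 ∈ Icc (-(2 * (M + E + 1))) (2 * (M + E + 1)) := by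
    intro y hy n
    obtain ⟨x, h1, h2⟩ := exists_x hy
    have e1 := hd n x y 0 0 0 h1 h2 hz0 hz0
    have e2 := hd n x 0 0 y 0 h2 h1 hz0 hz0
    have e3 := abs_le.1 (hM x y 0 h1 hz0)
    have e4 := abs_le.1 (hM x 0 0 h2 hz0)
    have := hn1 n
    constructor <;> linarith [e3.1, e3.2, e4.1, e4.2]
  have hlim : ∀ y, ∃ l, (-1 ≤ y ∧ y ≤ 2) → |l| ≤ 2 * (M + E + 1) ∧
      Tendsto (fun n => v n y - v n 0) (hyperfilter ℕ : Filter ℕ) (𝓝 l) := by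
    intro y
    by_cases hy : -1 ≤ y ∧ y ≤ 2
    · obtain ⟨l, hl, hl2⟩ := (isCompact_Icc (a := -(2 * (M + E + 1))) (b := 2 * (M + E + 1))).ultrafilter_le_nhds
        ((hyperfilter ℕ).map (fun n => v n y - v n 0))
        (by
          rw [le_principal_iff]
          exact Filter.mem_map.2 (Filter.univ_mem' (hbd y hy)))
      exact ⟨l, fun _ => ⟨abs_le.2 hl, hl2⟩⟩
    · exact ⟨0, fun h => absurd h hy⟩
  choose l hl using hlim
  refine ⟨l, 2 * (M + E + 1), fun y hy => (hl y hy).1, ?_⟩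
  intro x y z y' z' h1 h2 h3 h4
  have t1 := (hl y' h2.bounds.2.2).2.sub (hl y h1.bounds.2.2).2
  have t2 : Tendsto (fun n : ℕ => F x y' z' - F x y z + 2 * (E + 1 / ((n : ℝ) + 1)))
      (hyperfilter ℕ : Filter ℕ) (𝓝 (F x y' z' - F x y z + 2 * (E + 0))) := by
    have := (tendsto_one_div_add_atTop_nhds_zero_nat (𝕜 := ℝ)).mono_left Nat.hyperfilter_le_atTop
    exact ((this.const_add E).const_mul 2).const_add _
  rw [add_zero] at t2
  refine le_of_tendsto_of_tendsto' t1 t2 ?_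
  intro n
  have := hd n x y z y' z' h1 h2 h3 h4
  linarith

lemma isCompact_prism : IsCompact {x : Fin 3 → ℝ | QQ (x 0) (x 1) ∧ x 2 ∈ Icc (0 : ℝ) 1} := by
  have hb : {x : Fin 3 → ℝ | QQ (x 0) (x 1) ∧ x 2 ∈ Icc (0 : ℝ) 1} ⊆
      Icc (fun _ => (-1 : ℝ)) (fun _ => (7 / 2 : ℝ)) := by
    rintro x ⟨h1, h2, h3⟩
    obtain ⟨a, b, c, d⟩ := h1.bounds
    constructor <;> intro i <;> fin_cases i <;> simp <;> linarith
  refine (isCompact_Icc (a := fun _ : Fin 3 => (-1 : ℝ)) (b := fun _ => (7 / 2 : ℝ))).of_isClosed_subset ?_ hb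
  have h : ∀ g k : (Fin 3 → ℝ) → ℝ, Continuous g → Continuous k → IsClosed {x | g x ≤ k x} :=
    fun g k hg hk => isClosed_le hg hk
  have e : {x : Fin 3 → ℝ | QQ (x 0) (x 1) ∧ x 2 ∈ Icc (0 : ℝ) 1} =
      (({x : Fin 3 → ℝ | 0 ≤ x 1} ∩ ({x | x 1 ≤ 2 * x 0} ∩ {x | 2 * x 0 + x 1 ≤ 4})) ∪
      ({x : Fin 3 → ℝ | x 1 ≤ 1} ∩ ({x | 4 ≤ 2 * x 0 + x 1} ∩ {x | 2 * x 0 - 6 ≤ x 1}))) ∩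
      ({x : Fin 3 → ℝ | 0 ≤ x 2} ∩ {x | x 2 ≤ 1}) := by
    ext x; rfl
  rw [e]
  exact (((h _ _ (by fun_prop) (by fun_prop)).inter ((h _ _ (by fun_prop) (by fun_prop)).inter
    (h _ _ (by fun_prop) (by fun_prop)))).union ((h _ _ (by fun_prop) (by fun_prop)).inter
    ((h _ _ (by fun_prop) (by fun_prop)).inter (h _ _ (by fun_prop) (by fun_prop))))).inter
    ((h _ _ (by fun_prop) (by fun_prop)).inter (h _ _ (by fun_prop) (by fun_prop)))

/-- Example (c): for `X = {(x₁,x₂,x₃) : (x₁,x₂) ∈ Q, 0 ≤ x₃ ≤ 1}`,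
`a¹ = (0,1,0)` and `a² = (1,0,0)`, the space `R_c(X)` is proximinal in `C(X)`. -/
theorem proximinality_of_Rc_on_prism_over_Q
    (X : Set (Fin 3 → ℝ))
    (hXdef : X = {x : Fin 3 → ℝ | ![x 0, x 1] ∈ Qset ∧ x 2 ∈ Set.Icc (0 : ℝ) 1})
    (f : (Fin 3 → ℝ) → ℝ) (hf : ContinuousOn f X) :
    HasExtremalIn X f (RcSet ![(0 : ℝ), 1, 0] ![(1 : ℝ), 0, 0] X) := by
  have hX : X = {x : Fin 3 → ℝ | QQ (x 0) (x 1) ∧ x 2 ∈ Set.Icc (0 : ℝ) 1} := by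
    rw [hXdef]; ext x; simp only [Set.mem_setOf_eq, mem_Qset]
  clear hXdef
  have hcomp : IsCompact X := by rw [hX]; exact isCompact_prism
  have hmem : ∀ x y z, QQ x y → z ∈ Icc (0 : ℝ) 1 → ![x, y, z] ∈ X := by
    intro x y z h1 h2
    rw [hX]
    exact ⟨h1, h2⟩
  have hmem' : ∀ p ∈ X, QQ (p 0) (p 1) ∧ p 2 ∈ Icc (0 : ℝ) 1 := by
    intro p hp; rw [hX] at hp; exact hp
  have heta : ∀ p : Fin 3 → ℝ, p = ![p 0, p 1, p 2] := by
    intro p; ext i; fin_cases i <;> rfl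
  have hd1 : ∀ p : Fin 3 → ℝ, ![(0 : ℝ), 1, 0] ⬝ᵥ p = p 1 := by
    intro p; simp [dotProduct, Fin.sum_univ_three]
  have hd2 : ∀ p : Fin 3 → ℝ, ![(1 : ℝ), 0, 0] ⬝ᵥ p = p 0 := by
    intro p; simp [dotProduct, Fin.sum_univ_three]
  have hXne : X.Nonempty := ⟨![1, 0, 0], hmem 1 0 0 (Or.inl (by norm_num)) (by simp)⟩
  set F : ℝ → ℝ → ℝ → ℝ := fun x y z => f ![x, y, z] with hF
  obtain ⟨M, hM0⟩ := hcomp.exists_bound_of_continuousOn hf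
  have hM : ∀ x y z, QQ x y → z ∈ Icc (0 : ℝ) 1 → |F x y z| ≤ M :=
    fun x y z h1 h2 => hM0 _ (hmem x y z h1 h2)
  have hU : ∀ ε > 0, ∃ δ > 0, ∀ x y z x' y', QQ x y → QQ x' y' → z ∈ Icc (0 : ℝ) 1 →
      |x - x'| < δ → |y - y'| < δ → |F x y z - F x' y' z| ≤ ε := by
    intro ε hε
    have huc := hcomp.uniformContinuousOn_of_continuous hf
    rw [Metric.uniformContinuousOn_iff] at huc
    obtain ⟨δ, hδ, H⟩ := huc ε hε
    refine ⟨δ, hδ, fun x y z x' y' h1 h2 h3 h4 h5 => ?_⟩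
    have := H _ (hmem x y z h1 h3) _ (hmem x' y' z h2 h3) (by
      rw [dist_pi_lt_iff hδ]
      intro i
      fin_cases i
      · simpa [Real.dist_eq] using h4
      · simpa [Real.dist_eq] using h5
      · simpa using hδ)
    rw [Real.dist_eq] at this
    exact this.le
  set S := RcSet ![(0 : ℝ), 1, 0] ![(1 : ℝ), 0, 0] X with hS
  set E := sInf ((supDist X f) '' S) with hE
  have hSne : S.Nonempty := ⟨fun _ => 0, fun _ => 0, fun _ => 0, by simp, continuousOn_const,
    continuousOn_const⟩
  have hbb : BddBelow ((supDist X f) '' S) := by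
    refine ⟨0, ?_⟩
    rintro r ⟨g, -, rfl⟩
    apply Real.sSup_nonneg
    rintro r ⟨x, -, rfl⟩
    exact abs_nonneg _
  have hle : ∀ g ∈ S, ∀ p ∈ X, |f p - g p| ≤ supDist X f g := by
    rintro g ⟨g1, g2, h1, h2, h3⟩ p hp
    have hgc : ContinuousOn g X := (h2.add h3).congr h1
    obtain ⟨K, hK⟩ := hcomp.exists_bound_of_continuousOn (hf.sub hgc)
    refine le_csSup ⟨K, ?_⟩ ⟨p, hp, rfl⟩
    rintro r ⟨x, hx, rfl⟩
    exact hK x hx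
  have happ : ∀ n : ℕ, ∃ v u : ℝ → ℝ, ∀ x y z, QQ x y → z ∈ Icc (0 : ℝ) 1 →
      |F x y z - (v y + u x)| ≤ E + 1 / ((n : ℝ) + 1) := by
    intro n
    have hpos : 0 < 1 / ((n : ℝ) + 1) := by positivity
    obtain ⟨r, ⟨g, hg, rfl⟩, hr⟩ := exists_lt_of_csInf_lt (hSne.image (supDist X f))
      (show sInf ((supDist X f) '' S) < E + 1 / ((n : ℝ) + 1) by linarith)
    have hl := hle g hg
    obtain ⟨g1, g2, h1, h2, h3⟩ := hg
    refine ⟨g1, g2, fun x y z k1 k2 => ?_⟩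
    have e1 := hl _ (hmem x y z k1 k2)
    rw [h1 _ (hmem x y z k1 k2), hd1, hd2] at e1
    exact e1.trans hr.le
  obtain ⟨v, B, hB, hv⟩ := limit_exists F M E hM happ
  obtain ⟨g, hgc, hg⟩ := core F M E B v hM hU hB hv
  obtain ⟨u, huc, hu⟩ := core2 F M E g hM hU hgc hg
  have hin : (fun p : Fin 3 → ℝ => g (p 1) + u (p 0)) ∈ S := by
    refine ⟨g, u, ?_, ?_, ?_⟩
    · intro p _; rw [hd1, hd2]
    · simp only [hd1]
      exact hgc.comp (by fun_prop) (fun p hp => (hmem' p hp).1.bounds.2.2)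
    · simp only [hd2]
      exact huc.comp (by fun_prop)
        (fun p hp => ⟨(hmem' p hp).1.bounds.1, (hmem' p hp).1.bounds.2.1⟩)
  refine ⟨_, hin, le_antisymm ?_ (csInf_le hbb ⟨_, hin, rfl⟩)⟩
  refine csSup_le ?_ ?_
  · obtain ⟨p, hp⟩ := hXne
    exact ⟨_, p, hp, rfl⟩
  · rintro r ⟨p, hp, rfl⟩
    have := hu (p 0) (p 1) (p 2) (hmem' p hp).1 (hmem' p hp).2
    simp only [hF] at this
    rw [← heta p] at this
    exact this
end

section
/- Let X ⊂ ℝⁿ be compact and let a¹, a² be linearly independent directions. Suppose R_c(X) is proximinal in C(X). Then there exists a positive real number c such that sup_{t∈X} var_{O(t)} f ≤ c · sup_{t∈X} var_{{x∈X : a²·x = a²·t}} f for every f ∈ R_c¹, i.e. for every continuous function f on X of the form f(x) = g(a¹·x) with g : ℝ → ℝ. -/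
open Matrix Set Filter Topology

/-- Projection of `X` to its image under `x ↦ a ⬝ᵥ x`. -/
def ridgeProj {n : ℕ} (a : Fin n → ℝ) (X : Set (Fin n → ℝ)) :
    C(X, ((fun x => a ⬝ᵥ x) '' X : Set ℝ)) where
  toFun x := ⟨a ⬝ᵥ x.1, x.1, x.2, rfl⟩
  continuous_toFun := by
    apply Continuous.subtype_mk
    have h : Continuous fun x : Fin n → ℝ => a ⬝ᵥ x := by
      simp only [dotProduct]
      fun_prop
    exact h.comp continuous_subtype_val

lemma image_compact {n : ℕ} (a : Fin n → ℝ) (X : Set (Fin n → ℝ)) (hX : IsCompact X) :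
    IsCompact ((fun x => a ⬝ᵥ x) '' X) := by
  apply hX.image
  simp only [dotProduct]
  fun_prop

lemma ridgeProj_surj {n : ℕ} (a : Fin n → ℝ) (X : Set (Fin n → ℝ)) :
    Function.Surjective (ridgeProj a X) := by
  rintro ⟨_, x, hx, rfl⟩
  exact ⟨⟨x, hx⟩, rfl⟩

lemma ridge_lift {n : ℕ} (a : Fin n → ℝ) (X : Set (Fin n → ℝ)) (hX : IsCompact X)
    (g : ℝ → ℝ) (hg : ContinuousOn (fun x => g (a ⬝ᵥ x)) X) :
    ∃ u : C(((fun x => a ⬝ᵥ x) '' X : Set ℝ), ℝ), ∀ y, u y = g y := by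
  have : CompactSpace X := isCompact_iff_compactSpace.mp hX
  have hq : IsQuotientMap (ridgeProj a X) :=
    IsQuotientMap.of_surjective_continuous (ridgeProj_surj a X) (ridgeProj a X).continuous
  refine ⟨⟨fun y => g y, ?_⟩, fun _ => rfl⟩
  rw [hq.continuous_iff]
  exact hg.domRestrict

/-- The sum operator. -/
noncomputable def ridgeSum {n : ℕ} (a1 a2 : Fin n → ℝ) (X : Set (Fin n → ℝ)) :
    (C(((fun x => a1 ⬝ᵥ x) '' X : Set ℝ), ℝ) × C(((fun x => a2 ⬝ᵥ x) '' X : Set ℝ), ℝ))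
      →L[ℝ] C(X, ℝ) where
  toFun u := u.1.comp (ridgeProj a1 X) + u.2.comp (ridgeProj a2 X)
  map_add' u v := by
    ext x
    simp only [Prod.fst_add, Prod.snd_add, ContinuousMap.add_apply, ContinuousMap.comp_apply]
    ring
  map_smul' c u := by
    ext x
    simp
  cont := by
    have h1 := ContinuousMap.continuous_precomp (Z := ℝ) (ridgeProj a1 X)
    have h2 := ContinuousMap.continuous_precomp (Z := ℝ) (ridgeProj a2 X)
    exact (h1.comp continuous_fst).add (h2.comp continuous_snd)

lemma ridgeSum_apply {n : ℕ} (a1 a2 : Fin n → ℝ) (X : Set (Fin n → ℝ)) (u) (x : X) :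
    ridgeSum a1 a2 X u x = u.1 (ridgeProj a1 X x) + u.2 (ridgeProj a2 X x) := rfl

open Classical in
/-- Extension by zero of a function on a compact image. -/
noncomputable def extZ {S : Set ℝ} (u : S → ℝ) (s : ℝ) : ℝ := if h : s ∈ S then u ⟨s, h⟩ else 0

open Classical in
lemma ridgeSum_closed {n : ℕ} (a1 a2 : Fin n → ℝ) (X : Set (Fin n → ℝ)) (hX : IsCompact X)
    (hprox : ∀ f : (Fin n → ℝ) → ℝ, ContinuousOn f X →
      HasExtremalIn X f (RcSet a1 a2 X)) :
    IsClosed (Set.range (ridgeSum a1 a2 X)) := by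
  have : CompactSpace X := isCompact_iff_compactSpace.mp hX
  rw [← closure_subset_iff_isClosed]
  intro φ hφ
  set f : (Fin n → ℝ) → ℝ := fun x => if h : x ∈ X then φ ⟨x, h⟩ else 0 with hf
  have hfX : ∀ x : X, f x = φ x := fun x => by simp [hf]
  have hfc : ContinuousOn f X := by
    rw [continuousOn_iff_continuous_domRestrict]
    convert φ.continuous using 1
    ext x
    exact hfX x
  obtain ⟨r, ⟨g1, g2, hr, hg1, hg2⟩, hd⟩ := hprox f hfc
  have hnn : ∀ r, 0 ≤ supDist X f r := fun r =>
    Real.sSup_nonneg (by rintro _ ⟨x, _, rfl⟩; positivity)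
  have h0 : supDist X f r ≤ 0 := by
    rw [hd]
    apply le_of_forall_pos_le_add
    intro ε hε
    rw [zero_add]
    rw [Metric.mem_closure_iff] at hφ
    obtain ⟨_, ⟨u, rfl⟩, hu⟩ := hφ ε hε
    set q : (Fin n → ℝ) → ℝ := fun x => extZ u.1 (a1 ⬝ᵥ x) + extZ u.2 (a2 ⬝ᵥ x) with hq
    have e1 : ∀ x : X, extZ u.1 (a1 ⬝ᵥ x.1) = u.1 (ridgeProj a1 X x) := fun x =>
      dif_pos ⟨x.1, x.2, rfl⟩
    have e2 : ∀ x : X, extZ u.2 (a2 ⬝ᵥ x.1) = u.2 (ridgeProj a2 X x) := fun x =>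
      dif_pos ⟨x.1, x.2, rfl⟩
    have hqm : q ∈ RcSet a1 a2 X := by
      refine ⟨extZ u.1, extZ u.2, fun x _ => rfl, ?_, ?_⟩
      · rw [continuousOn_iff_continuous_domRestrict]
        exact (u.1.comp (ridgeProj a1 X)).continuous.congr fun x => (e1 x).symm
      · rw [continuousOn_iff_continuous_domRestrict]
        exact (u.2.comp (ridgeProj a2 X)).continuous.congr fun x => (e2 x).symm
    have hbd : BddBelow (supDist X f '' RcSet a1 a2 X) := by
      refine ⟨0, ?_⟩
      rintro _ ⟨r, _, rfl⟩
      exact hnn r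
    refine (csInf_le hbd ⟨q, hqm, rfl⟩).trans ?_
    · refine Real.sSup_le ?_ hε.le
      rintro _ ⟨x, hx, rfl⟩
      have := (ContinuousMap.dist_apply_le_dist (f := φ) (g := ridgeSum a1 a2 X u) ⟨x, hx⟩).trans
        hu.le
      rw [Real.dist_eq, ridgeSum_apply, ← e1, ← e2, ← hfX] at this
      exact this
  have hrc : ContinuousOn r X := (hg1.add hg2).congr hr
  obtain ⟨M, hM⟩ := hX.exists_bound_of_continuousOn (hfc.sub hrc)
  have heq : ∀ x ∈ X, f x = r x := by
    intro x hx
    have : |f x - r x| ≤ supDist X f r := by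
      refine le_csSup ⟨M, ?_⟩ ⟨x, hx, rfl⟩
      rintro _ ⟨y, hy, rfl⟩
      exact hM y hy
    have := abs_nonpos_iff.mp (this.trans h0)
    linarith
  obtain ⟨u1, hu1⟩ := ridge_lift a1 X hX g1 hg1
  obtain ⟨u2, hu2⟩ := ridge_lift a2 X hX g2 hg2
  refine ⟨(u1, u2), ?_⟩
  ext x
  rw [ridgeSum_apply, ← hfX, heq x x.2, hr x x.2]
  simp only [hu1, hu2]
  rfl

/-- Approximation by functions of `a ⬝ᵥ x`, up to the fibre variation. -/
lemma fibre_approx {n : ℕ} (a : Fin n → ℝ) (X : Set (Fin n → ℝ)) (hX : IsCompact X)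
    (φ : C(X, ℝ)) (D ε : ℝ) (hε : 0 < ε)
    (hD : ∀ x y : X, ridgeProj a X x = ridgeProj a X y → |φ x - φ y| ≤ D) :
    ∃ h : C(((fun x => a ⬝ᵥ x) '' X : Set ℝ), ℝ),
      ∀ x, |φ x - h (ridgeProj a X x)| ≤ D + ε := by
  have : CompactSpace X := isCompact_iff_compactSpace.mp hX
  have : CompactSpace ((fun x => a ⬝ᵥ x) '' X : Set ℝ) :=
    isCompact_iff_compactSpace.mp (image_compact a X hX)
  have key := exists_continuous_forall_mem_convex_of_local_const
    (t := fun y : ((fun x => a ⬝ᵥ x) '' X : Set ℝ) =>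
      {c : ℝ | ∀ x, ridgeProj a X x = y → |φ x - c| ≤ D + ε}) ?_ ?_
  · obtain ⟨h, hh⟩ := key
    exact ⟨h, fun x => hh _ x rfl⟩
  · intro y
    have : {c : ℝ | ∀ x, ridgeProj a X x = y → |φ x - c| ≤ D + ε} =
        ⋂ x, ⋂ (_ : ridgeProj a X x = y), Metric.closedBall (φ x) (D + ε) := by
      ext c
      simp only [mem_ofPred_eq, mem_iInter, Metric.mem_closedBall, Real.dist_eq]
      simp only [abs_sub_comm]
    rw [this]
    exact convex_iInter fun x => convex_iInter fun _ => convex_closedBall _ _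
  · intro y
    obtain ⟨t, rfl⟩ := ridgeProj_surj a X y
    refine ⟨φ t, ?_⟩
    have hcl : IsClosedMap (ridgeProj a X) := (ridgeProj a X).continuous.isClosedMap
    have hK : IsClosed {x : X | D + ε ≤ |φ x - φ t|} :=
      isClosed_le continuous_const (by fun_prop)
    have hO := (hcl _ hK).isOpen_compl
    have hm : ridgeProj a X t ∈ (ridgeProj a X '' {x : X | D + ε ≤ |φ x - φ t|})ᶜ := by
      rintro ⟨x, hx, hxt⟩
      have := hD x t hxt
      simp only [mem_ofPred_eq] at hx
      linarith
    filter_upwards [hO.mem_nhds hm] with y hy x hxy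
    by_contra hc
    exact hy ⟨x, (not_le.mp hc).le, hxy⟩

lemma pathFrom_const {n : ℕ} (a1 a2 : Fin n → ℝ) (X : Set (Fin n → ℝ)) (F : (Fin n → ℝ) → ℝ)
    (h1 : ∀ x ∈ X, ∀ y ∈ X, a1 ⬝ᵥ x = a1 ⬝ᵥ y → F x = F y)
    (h2 : ∀ x ∈ X, ∀ y ∈ X, a2 ⬝ᵥ x = a2 ⬝ᵥ y → F x = F y)
    (m : ℕ) (p : ℕ → Fin n → ℝ) (hp : IsPathFrom a1 a2 m p) (hpX : ∀ i < m, p i ∈ X) :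
    ∀ i < m, F (p i) = F (p 0) := by
  intro i
  induction i with
  | zero => intro _; rfl
  | succ k ih =>
    intro hk
    rw [← ih (by omega)]
    obtain ⟨-, hA, hB⟩ := hp k hk
    rcases Nat.mod_two_eq_zero_or_one k with h | h
    · apply h1 _ (hpX _ hk) _ (hpX _ (by omega))
      have := hA h
      rwa [dotProduct_sub, sub_eq_zero] at this
    · apply h2 _ (hpX _ hk) _ (hpX _ (by omega))
      have := hB h
      rwa [dotProduct_sub, sub_eq_zero] at this

lemma orbit_const {n : ℕ} (a1 a2 : Fin n → ℝ) (X : Set (Fin n → ℝ)) (F : (Fin n → ℝ) → ℝ)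
    (h1 : ∀ x ∈ X, ∀ y ∈ X, a1 ⬝ᵥ x = a1 ⬝ᵥ y → F x = F y)
    (h2 : ∀ x ∈ X, ∀ y ∈ X, a2 ⬝ᵥ x = a2 ⬝ᵥ y → F x = F y)
    (t y : Fin n → ℝ) (hy : y ∈ Orbit a1 a2 X t) : y ∈ X ∧ F y = F t := by
  obtain ⟨m, p, ⟨-, hp, hpX⟩, ⟨i, hi, rfl⟩, ⟨j, hj, rfl⟩⟩ := hy
  refine ⟨hpX j hj, ?_⟩
  rcases hp with hp | hp
  · have := pathFrom_const a1 a2 X F h1 h2 m p hp hpX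
    rw [this i hi, this j hj]
  · have := pathFrom_const a2 a1 X F h2 h1 m p hp hpX
    rw [this i hi, this j hj]

lemma open_const {n : ℕ} (a1 a2 : Fin n → ℝ) (X : Set (Fin n → ℝ))
    [CompactSpace X] [CompactSpace ((fun x => a1 ⬝ᵥ x) '' X : Set ℝ)]
    [CompactSpace ((fun x => a2 ⬝ᵥ x) '' X : Set ℝ)]
    (hcl : IsClosed (Set.range (ridgeSum a1 a2 X))) :
    ∃ C > 0, ∀ u, ∃ v, ridgeSum a1 a2 X v = ridgeSum a1 a2 X u ∧
      ‖v‖ ≤ C * ‖ridgeSum a1 a2 X u‖ := by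
  set T := ridgeSum a1 a2 X with hT
  have : CompleteSpace (LinearMap.range T.toLinearMap) := by
    have : IsClosed ((LinearMap.range T.toLinearMap : Submodule ℝ C(X, ℝ)) : Set C(X, ℝ)) := hcl
    exact this.completeSpace_coe
  have hs : Function.Surjective (T.codRestrict (LinearMap.range T.toLinearMap)
      (fun u => ⟨u, rfl⟩)) := by
    rintro ⟨_, u, rfl⟩
    exact ⟨u, rfl⟩
  obtain ⟨C, hC, h⟩ := ContinuousLinearMap.exists_preimage_norm_le (σ := RingHom.id ℝ) (σ' := RingHom.id ℝ)
    (E := C(((fun x => a1 ⬝ᵥ x) '' X : Set ℝ), ℝ) × C(((fun x => a2 ⬝ᵥ x) '' X : Set ℝ), ℝ))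
    (F := LinearMap.range T.toLinearMap) (T.codRestrict (LinearMap.range T.toLinearMap)
      (fun u => ⟨u, rfl⟩)) hs
  refine ⟨C, hC, fun u => ?_⟩
  obtain ⟨v, hv, hn⟩ := h ⟨T u, u, rfl⟩
  exact ⟨v, congrArg Subtype.val hv, hn⟩

/-- Theorem 2.2: if `R_c(X)` is proximinal in `C(X)`, then there is
`c > 0` such that `sup_{t∈X} var_{O(t)} f ≤ c · sup_{t∈X} var_{π₂⁻¹(π₂(t))} f` for every
continuous function `f` on `X` of the form `f(x) = g(a¹·x)`. -/
theorem orbit_variation_bound_of_proximinal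
    {n : ℕ} (a1 a2 : Fin n → ℝ) (hindep : LinearIndependent ℝ ![a1, a2])
    (X : Set (Fin n → ℝ)) (hX : IsCompact X)
    (hprox : ∀ f : (Fin n → ℝ) → ℝ, ContinuousOn f X →
      HasExtremalIn X f (RcSet a1 a2 X)) :
    ∃ c : ℝ, 0 < c ∧
      ∀ (g : ℝ → ℝ) (f : (Fin n → ℝ) → ℝ),
        (∀ x ∈ X, f x = g (a1 ⬝ᵥ x)) → ContinuousOn f X →
        sSup {r | ∃ t ∈ X, r = varOn f (Orbit a1 a2 X t)} ≤
          c * sSup {r | ∃ t ∈ X, r = varOn f {x ∈ X | a2 ⬝ᵥ x = a2 ⬝ᵥ t}} := by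
  have : CompactSpace X := isCompact_iff_compactSpace.mp hX
  have : CompactSpace ((fun x => a1 ⬝ᵥ x) '' X : Set ℝ) :=
    isCompact_iff_compactSpace.mp (image_compact a1 X hX)
  have : CompactSpace ((fun x => a2 ⬝ᵥ x) '' X : Set ℝ) :=
    isCompact_iff_compactSpace.mp (image_compact a2 X hX)
  obtain ⟨C, hC, hopen⟩ := open_const a1 a2 X (ridgeSum_closed a1 a2 X hX hprox)
  refine ⟨2 * C, by positivity, fun g f hfg hf => ?_⟩
  set D := sSup {r | ∃ t ∈ X, r = varOn f {x ∈ X | a2 ⬝ᵥ x = a2 ⬝ᵥ t}} with hDdef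
  obtain ⟨M, hM⟩ := hX.exists_bound_of_continuousOn hf
  have hvar0 : ∀ Y, 0 ≤ varOn f Y := fun Y =>
    Real.sSup_nonneg (by rintro _ ⟨x, _, y, _, rfl⟩; positivity)
  have hD0 : 0 ≤ D := Real.sSup_nonneg (by rintro _ ⟨t, _, rfl⟩; exact hvar0 _)
  have hb : ∀ x ∈ X, ∀ y ∈ X, |f x - f y| ≤ M + M := fun x hx y hy =>
    (abs_sub _ _).trans (add_le_add (hM x hx) (hM y hy))
  have hDle : ∀ x ∈ X, ∀ y ∈ X, a2 ⬝ᵥ x = a2 ⬝ᵥ y → |f x - f y| ≤ D := by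
    intro x hx y hy hxy
    have h1 : |f x - f y| ≤ varOn f {z ∈ X | a2 ⬝ᵥ z = a2 ⬝ᵥ y} := by
      refine le_csSup ⟨M + M, ?_⟩ ⟨x, ⟨hx, hxy⟩, y, ⟨hy, rfl⟩, rfl⟩
      rintro _ ⟨z, hz, w, hw, rfl⟩
      exact hb z hz.1 w hw.1
    refine h1.trans (le_csSup ⟨M + M, ?_⟩ ⟨y, hy, rfl⟩)
    rintro _ ⟨t, ht, rfl⟩
    refine csSup_le ⟨_, t, ⟨ht, rfl⟩, t, ⟨ht, rfl⟩, rfl⟩ ?_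
    rintro _ ⟨z, hz, w, hw, rfl⟩
    exact hb z hz.1 w hw.1
  obtain ⟨v, hv⟩ := ridge_lift a1 X hX g (hf.congr fun x hx => (hfg x hx).symm)
  let φ : C(X, ℝ) := v.comp (ridgeProj a1 X)
  have hφ : ∀ x : X, φ x = f x := fun x => (hv _).trans (hfg x x.2).symm
  have main : ∀ ε > 0, ∀ t ∈ X, ∀ x ∈ Orbit a1 a2 X t, ∀ y ∈ Orbit a1 a2 X t,
      |f x - f y| ≤ 2 * C * (D + ε) := by
    intro ε hε t ht x hx y hy
    obtain ⟨h, hh⟩ := fibre_approx a2 X hX φ D ε hε (by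
      intro x y hxy
      rw [hφ, hφ]
      exact hDle x x.2 y y.2 (congrArg Subtype.val hxy))
    obtain ⟨u, hu, hun⟩ := hopen (v, -h)
    have hnorm : ‖ridgeSum a1 a2 X (v, -h)‖ ≤ D + ε := by
      rw [ContinuousMap.norm_le _ (by positivity)]
      intro x
      have := hh x
      rw [sub_eq_add_neg] at this
      exact this
    have hu1 : ‖u.1‖ ≤ C * (D + ε) :=
      (norm_fst_le u).trans (hun.trans (mul_le_mul_of_nonneg_left hnorm hC.le))
    have hpt : ∀ z : X, u.1 (ridgeProj a1 X z) + u.2 (ridgeProj a2 X z) =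
        f z - h (ridgeProj a2 X z) := by
      intro z
      have := DFunLike.congr_fun hu z
      rw [ridgeSum_apply, ridgeSum_apply] at this
      rw [this, ← hφ z]
      exact (sub_eq_add_neg _ _).symm
    let F : (Fin n → ℝ) → ℝ := fun z => f z - extZ u.1 (a1 ⬝ᵥ z)
    have hF : ∀ z (hz : z ∈ X), F z = f z - u.1 (ridgeProj a1 X ⟨z, hz⟩) := by
      intro z hz
      have : extZ u.1 (a1 ⬝ᵥ z) = u.1 (ridgeProj a1 X ⟨z, hz⟩) := dif_pos ⟨z, hz, rfl⟩
      simp only [F, this]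
    have hO := orbit_const a1 a2 X F
      (by
        intro x hx y hy hxy
        simp only [F, hfg x hx, hfg y hy, hxy])
      (by
        intro x hx y hy hxy
        have e : ridgeProj a2 X ⟨x, hx⟩ = ridgeProj a2 X ⟨y, hy⟩ := Subtype.ext hxy
        have p1 := hpt ⟨x, hx⟩
        have p2 := hpt ⟨y, hy⟩
        rw [e] at p1
        rw [hF x hx, hF y hy]
        simp only at p1 p2
        linarith) t
    obtain ⟨hxX, hx1⟩ := hO x hx
    obtain ⟨hyX, hy1⟩ := hO y hy
    rw [hF x hxX] at hx1
    rw [hF y hyX] at hy1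
    have b1 := (u.1.norm_coe_le_norm (ridgeProj a1 X ⟨x, hxX⟩)).trans hu1
    have b2 := (u.1.norm_coe_le_norm (ridgeProj a1 X ⟨y, hyX⟩)).trans hu1
    rw [Real.norm_eq_abs, abs_le] at b1 b2
    rw [abs_le]
    constructor <;> linarith
  refine Real.sSup_le ?_ (by positivity)
  rintro _ ⟨t, ht, rfl⟩
  refine Real.sSup_le ?_ (by positivity)
  rintro _ ⟨x, hx, y, hy, rfl⟩
  apply le_of_forall_pos_le_add
  intro δ hδ
  have := main (δ / (2 * C)) (by positivity) t ht x hx y hy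
  rwa [mul_add, mul_div_cancel₀ _ (by positivity)] at this
end

section
/- Let X ⊂ ℝⁿ be compact, let a¹, a² be linearly independent directions, and suppose the lengths of all irreducible paths in X (with respect to a¹ and a²) are bounded by a positive integer n₀. Then for every f ∈ R_c¹, i.e. every continuous function f on X of the form f(x) = g(a¹·x), one has sup_{t∈X} var_{O(t)} f ≤ (n₀/2) · sup_{t∈X} var_{{x∈X : a²·x = a²·t}} f. -/
open Matrix Set Filter Topology

/-- `y` is the endpoint of a path in `X` from `x` with `m` points. -/
def PJoin {n : ℕ} (a1 a2 : Fin n → ℝ) (X : Set (Fin n → ℝ)) (m : ℕ) (x y : Fin n → ℝ) : Prop :=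
  ∃ p, IsPathIn a1 a2 X m p ∧ p 0 = x ∧ p (m - 1) = y

theorem PJoin.swap {n : ℕ} {a1 a2 : Fin n → ℝ} {X : Set (Fin n → ℝ)} {m : ℕ} {x y : Fin n → ℝ}
    (h : PJoin a1 a2 X m x y) : PJoin a2 a1 X m x y := by
  obtain ⟨p, ⟨h1, h2, h3⟩, h4⟩ := h
  exact ⟨p, ⟨h1, h2.symm, h3⟩, h4⟩

theorem pjoin_append {n : ℕ} {b1 b2 : Fin n → ℝ} {X : Set (Fin n → ℝ)} {m : ℕ}
    {p : ℕ → Fin n → ℝ} (hm : 1 ≤ m) (hp : IsPathFrom b1 b2 m p) (hpX : ∀ i < m, p i ∈ X)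
    {z : Fin n → ℝ} (hz : z ∈ X) (hne : z - p (m - 1) ≠ 0)
    (h0 : (m - 1) % 2 = 0 → b1 ⬝ᵥ (z - p (m - 1)) = 0)
    (h1 : (m - 1) % 2 = 1 → b2 ⬝ᵥ (z - p (m - 1)) = 0) :
    PJoin b1 b2 X (m + 1) (p 0) z := by
  refine ⟨Function.update p m z, ⟨by omega, Or.inl ?_, ?_⟩, ?_, ?_⟩
  · intro i hi
    rcases Nat.lt_or_ge (i + 1) m with h | h
    · rw [Function.update_of_ne (by omega), Function.update_of_ne (by omega)]
      exact hp i h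
    · obtain rfl : m = i + 1 := by omega
      rw [Function.update_self, Function.update_of_ne (by omega)]
      rw [Nat.add_sub_cancel] at hne h0 h1
      exact ⟨hne, h0, h1⟩
  · intro i hi
    rcases Nat.lt_or_ge i m with h | h
    · rw [Function.update_of_ne (by omega)]; exact hpX i h
    · obtain rfl : i = m := by omega
      rwa [Function.update_self]
  · rw [Function.update_of_ne (by omega)]
  · simp

theorem pjoin_single {n : ℕ} {b1 b2 : Fin n → ℝ} {X : Set (Fin n → ℝ)} {x : Fin n → ℝ}
    (hx : x ∈ X) : PJoin b1 b2 X 1 x x :=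
  ⟨fun _ => x, ⟨le_rfl, Or.inl (fun i hi => by omega), fun _ _ => hx⟩, rfl, rfl⟩

theorem pjoin_replace {n : ℕ} {b1 b2 : Fin n → ℝ} {X : Set (Fin n → ℝ)} {m : ℕ}
    {p : ℕ → Fin n → ℝ} (hp : IsPathFrom b1 b2 (m + 2) p) (hpX : ∀ i < m + 2, p i ∈ X)
    {z : Fin n → ℝ} (hz : z ∈ X)
    (h0 : m % 2 = 0 → b1 ⬝ᵥ (z - p (m + 1)) = 0)
    (h1 : m % 2 = 1 → b2 ⬝ᵥ (z - p (m + 1)) = 0) :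
    ∃ k, PJoin b1 b2 X k (p 0) z := by
  have hp' : IsPathFrom b1 b2 (m + 1) p := fun i hi => hp i (by omega)
  have hpX' : ∀ i < m + 1, p i ∈ X := fun i hi => hpX i (by omega)
  by_cases hne : z - p m = 0
  · exact ⟨m + 1, p, ⟨by omega, Or.inl hp', hpX'⟩, rfl, by simpa using (sub_eq_zero.1 hne).symm⟩
  · obtain ⟨-, e0, e1⟩ := hp m (by omega)
    refine ⟨_, pjoin_append (by omega) hp' hpX' hz (by simpa using hne) ?_ ?_⟩
    · intro h
      have a := h0 (by simpa using h)
      have b := e0 (by simpa using h)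
      simp only [dotProduct_sub, Nat.add_sub_cancel] at *
      linarith
    · intro h
      have a := h1 (by simpa using h)
      have b := e1 (by simpa using h)
      simp only [dotProduct_sub, Nat.add_sub_cancel] at *
      linarith

theorem pjoin_step_aux {n : ℕ} {b1 b2 : Fin n → ℝ} {X : Set (Fin n → ℝ)} {m : ℕ}
    {p : ℕ → Fin n → ℝ} (hm : 1 ≤ m) (hp : IsPathFrom b1 b2 m p) (hpX : ∀ i < m, p i ∈ X)
    {z : Fin n → ℝ} (hz : z ∈ X)
    (h : b1 ⬝ᵥ (z - p (m - 1)) = 0 ∨ b2 ⬝ᵥ (z - p (m - 1)) = 0) :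
    ∃ k, PJoin b1 b2 X k (p 0) z := by
  by_cases hne : z - p (m - 1) = 0
  · exact ⟨m, p, ⟨hm, Or.inl hp, hpX⟩, rfl, (sub_eq_zero.1 hne).symm⟩
  by_cases hc : ((m - 1) % 2 = 0 → b1 ⬝ᵥ (z - p (m - 1)) = 0) ∧
      ((m - 1) % 2 = 1 → b2 ⬝ᵥ (z - p (m - 1)) = 0)
  · exact ⟨_, pjoin_append hm hp hpX hz hne hc.1 hc.2⟩
  obtain rfl | ⟨k, rfl⟩ : m = 1 ∨ ∃ k, m = k + 2 := by
    rcases Nat.lt_or_ge m 2 with h | h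
    · left; omega
    · right; exact ⟨m - 2, by omega⟩
  · have h2 : b2 ⬝ᵥ (z - p 0) = 0 := by
      rcases h with h | h
      · exact absurd ⟨fun _ => h, fun h' => by omega⟩ hc
      · simpa using h
    have hp' : IsPathFrom b2 b1 1 p := fun i hi => by omega
    exact ⟨_, (pjoin_append hm hp' hpX hz hne (fun _ => by simpa using h2)
      (fun h' => by omega)).swap⟩
  · have e : k + 2 - 1 = k + 1 := by omega
    rw [e] at h hc
    apply pjoin_replace hp hpX hz
    · intro hk
      rcases h with h | h
      · exact h
      · exact absurd ⟨fun h' => by omega, fun _ => h⟩ hc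
    · intro hk
      rcases h with h | h
      · exact absurd ⟨fun _ => h, fun h' => by omega⟩ hc
      · exact h

theorem pjoin_step {n : ℕ} {a1 a2 : Fin n → ℝ} {X : Set (Fin n → ℝ)}
    {x y z : Fin n → ℝ} (hy : ∃ k, PJoin a1 a2 X k x y) (hz : z ∈ X)
    (h : a1 ⬝ᵥ (z - y) = 0 ∨ a2 ⬝ᵥ (z - y) = 0) :
    ∃ k, PJoin a1 a2 X k x z := by
  obtain ⟨m, p, ⟨hm, hp | hp, hpX⟩, rfl, rfl⟩ := hy
  · exact pjoin_step_aux hm hp hpX hz h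
  · obtain ⟨k, hk⟩ := pjoin_step_aux hm hp hpX hz h.symm
    exact ⟨k, hk.swap⟩

theorem pjoin_along {n : ℕ} {a1 a2 : Fin n → ℝ} {X : Set (Fin n → ℝ)} {m : ℕ}
    {p : ℕ → Fin n → ℝ} (hp : IsPathIn a1 a2 X m p) {x : Fin n → ℝ} {i j : ℕ}
    (hi : i < m) (hj : j < m) (h : ∃ k, PJoin a1 a2 X k x (p i)) :
    ∃ k, PJoin a1 a2 X k x (p j) := by
  obtain ⟨hm, hp, hpX⟩ := hp
  have key : ∀ i, i + 1 < m → a1 ⬝ᵥ (p (i + 1) - p i) = 0 ∨ a2 ⬝ᵥ (p (i + 1) - p i) = 0 := by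
    intro i hi
    rcases hp with hp | hp <;> obtain ⟨-, h0, h1⟩ := hp i hi <;>
      rcases Nat.mod_two_eq_zero_or_one i with e | e
    · exact Or.inl (h0 e)
    · exact Or.inr (h1 e)
    · exact Or.inr (h0 e)
    · exact Or.inl (h1 e)
  have down : ∀ i, i < m → (∃ k, PJoin a1 a2 X k x (p i)) → ∃ k, PJoin a1 a2 X k x (p 0) := by
    intro i
    induction i with
    | zero => exact fun _ h => h
    | succ i ih =>
      intro hi h
      refine ih (by omega) (pjoin_step h (hpX i (by omega)) ?_)
      rw [← neg_sub (p (i + 1)) (p i), dotProduct_neg, dotProduct_neg, neg_eq_zero, neg_eq_zero]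
      exact key i hi
  have h0 := down i hi h
  clear h hi
  induction j with
  | zero => exact h0
  | succ j ih => exact pjoin_step (ih (by omega)) (hpX _ hj) (key j hj)

theorem path_var {n : ℕ} {a1 a2 : Fin n → ℝ} {X : Set (Fin n → ℝ)} {m : ℕ}
    {p : ℕ → Fin n → ℝ} (hp : IsPathIn a1 a2 X m p) {f : (Fin n → ℝ) → ℝ} {V : ℝ} (hV : 0 ≤ V)
    (h1 : ∀ x ∈ X, ∀ y ∈ X, a1 ⬝ᵥ (y - x) = 0 → f x = f y)
    (h2 : ∀ x ∈ X, ∀ y ∈ X, a2 ⬝ᵥ (y - x) = 0 → |f x - f y| ≤ V) :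
    |f (p 0) - f (p (m - 1))| ≤ (m : ℝ) / 2 * V := by
  obtain ⟨hm, hp | hp, hpX⟩ := hp
  · have : ∀ i, i < m → |f (p 0) - f (p i)| ≤ ((i / 2 : ℕ) : ℝ) * V := by
      intro i
      induction i with
      | zero => simp
      | succ i ih =>
        intro hi
        have ih := ih (by omega)
        obtain ⟨-, e0, e1⟩ := hp i hi
        rcases Nat.mod_two_eq_zero_or_one i with e | e
        · rw [← h1 _ (hpX i (by omega)) _ (hpX _ hi) (e0 e)]
          rwa [show (i + 1) / 2 = i / 2 by omega]
        · have := h2 _ (hpX i (by omega)) _ (hpX _ hi) (e1 e)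
          have t := abs_sub_le (f (p 0)) (f (p i)) (f (p (i + 1)))
          rw [show (i + 1) / 2 = i / 2 + 1 by omega]
          push_cast
          linarith
    refine (this (m - 1) (by omega)).trans (mul_le_mul_of_nonneg_right ?_ hV)
    have : (m - 1) / 2 * 2 ≤ m := by omega
    have : (((m - 1) / 2 : ℕ) : ℝ) * 2 ≤ m := by exact_mod_cast this
    linarith
  · have : ∀ i, i < m → |f (p 0) - f (p i)| ≤ (((i + 1) / 2 : ℕ) : ℝ) * V := by
      intro i
      induction i with
      | zero => simp
      | succ i ih =>
        intro hi
        have ih := ih (by omega)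
        obtain ⟨-, e0, e1⟩ := hp i hi
        rcases Nat.mod_two_eq_zero_or_one i with e | e
        · have := h2 _ (hpX i (by omega)) _ (hpX _ hi) (e0 e)
          have t := abs_sub_le (f (p 0)) (f (p i)) (f (p (i + 1)))
          rw [show (i + 1 + 1) / 2 = (i + 1) / 2 + 1 by omega]
          push_cast
          linarith
        · rw [← h1 _ (hpX i (by omega)) _ (hpX _ hi) (e1 e)]
          rwa [show (i + 1 + 1) / 2 = (i + 1) / 2 by omega]
    refine (this (m - 1) (by omega)).trans (mul_le_mul_of_nonneg_right ?_ hV)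
    have : (m - 1 + 1) / 2 * 2 ≤ m := by omega
    have : (((m - 1 + 1) / 2 : ℕ) : ℝ) * 2 ≤ m := by exact_mod_cast this
    linarith

theorem varOn_nonneg {n : ℕ} (f : (Fin n → ℝ) → ℝ) (Y : Set (Fin n → ℝ)) : 0 ≤ varOn f Y := by
  apply Real.sSup_nonneg
  rintro r ⟨x, -, y, -, rfl⟩
  exact abs_nonneg _

/-- if the lengths of all irreducible paths in `X` are bounded by a
positive integer `n₀`, then every continuous function `f` on `X` of the form
`f(x) = g(a¹·x)` satisfies
`sup_{t∈X} var_{O(t)} f ≤ (n₀/2) · sup_{t∈X} var_{π₂⁻¹(π₂(t))} f`. -/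
theorem orbit_variation_bound_of_bounded_paths
    {n : ℕ} (a1 a2 : Fin n → ℝ) (hindep : LinearIndependent ℝ ![a1, a2])
    (X : Set (Fin n → ℝ)) (hX : IsCompact X)
    (n0 : ℕ) (hn0 : 0 < n0)
    (hbound : ∀ m p, IsIrreduciblePathIn a1 a2 X m p → m ≤ n0)
    (g : ℝ → ℝ) (f : (Fin n → ℝ) → ℝ)
    (hfg : ∀ x ∈ X, f x = g (a1 ⬝ᵥ x)) (hf : ContinuousOn f X) :
    sSup {r | ∃ t ∈ X, r = varOn f (Orbit a1 a2 X t)} ≤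
      ((n0 : ℝ) / 2) * sSup {r | ∃ t ∈ X, r = varOn f {x ∈ X | a2 ⬝ᵥ x = a2 ⬝ᵥ t}} := by
  obtain ⟨M, hM⟩ := hX.exists_bound_of_continuousOn hf
  simp only [Real.norm_eq_abs] at hM
  have hdiff : ∀ x ∈ X, ∀ y ∈ X, |f x - f y| ≤ 2 * M := by
    intro x hx y hy
    have a := abs_le.1 (hM x hx)
    have b := abs_le.1 (hM y hy)
    rw [abs_le]
    constructor <;> linarith
  set V := sSup {r | ∃ t ∈ X, r = varOn f {x ∈ X | a2 ⬝ᵥ x = a2 ⬝ᵥ t}} with hVdef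
  have hV : 0 ≤ V := by
    apply Real.sSup_nonneg
    rintro r ⟨t, -, rfl⟩
    exact varOn_nonneg _ _
  have h2 : ∀ x ∈ X, ∀ y ∈ X, a2 ⬝ᵥ (y - x) = 0 → |f x - f y| ≤ V := by
    intro x hx y hy h
    rw [dotProduct_sub, sub_eq_zero] at h
    have A : |f x - f y| ≤ varOn f {z ∈ X | a2 ⬝ᵥ z = a2 ⬝ᵥ x} := by
      apply le_csSup
      · refine ⟨2 * M, ?_⟩
        rintro r ⟨u, hu, v, hv, rfl⟩
        exact hdiff u hu.1 v hv.1
      · exact ⟨x, ⟨hx, rfl⟩, y, ⟨hy, h⟩, rfl⟩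
    refine A.trans (le_csSup ?_ ⟨x, hx, rfl⟩)
    refine ⟨2 * M, ?_⟩
    rintro r ⟨t, ht, rfl⟩
    apply Real.sSup_le
    · rintro r ⟨u, hu, v, hv, rfl⟩
      exact hdiff u hu.1 v hv.1
    · have := (abs_nonneg _).trans (hM t ht)
      linarith
  have h1 : ∀ x ∈ X, ∀ y ∈ X, a1 ⬝ᵥ (y - x) = 0 → f x = f y := by
    intro x hx y hy h
    rw [dotProduct_sub, sub_eq_zero] at h
    rw [hfg x hx, hfg y hy, h]
  have hR : 0 ≤ (n0 : ℝ) / 2 * V := by positivity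
  apply Real.sSup_le _ hR
  rintro r ⟨t, ht, rfl⟩
  apply Real.sSup_le _ hR
  rintro r ⟨x, ⟨m, p, hp, ⟨i, hi, hpi⟩, ⟨j, hj, hpj⟩⟩, y, ⟨m', q, hq, ⟨i', hi', hqi⟩, ⟨j', hj', hqj⟩⟩, rfl⟩
  have hxX : x ∈ X := hpj ▸ hp.2.2 j hj
  have ht' : ∃ k, PJoin a1 a2 X k x t := by
    rw [← hpi]
    refine pjoin_along hp hj hi ?_
    rw [hpj]
    exact ⟨1, pjoin_single hxX⟩
  have hy' : ∃ k, PJoin a1 a2 X k x y := by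
    rw [← hqj]
    refine pjoin_along hq hi' hj' ?_
    rwa [hqi]
  classical
  obtain ⟨s, hs, hs0, hs1⟩ := Nat.find_spec hy'
  have hle := hbound (Nat.find hy') s ⟨hs, by
    rintro ⟨l, w, hl, hw, hw0, hw1⟩
    exact Nat.find_min hy' hl ⟨w, hw, hw0.trans hs0, hw1.trans hs1⟩⟩
  have := path_var hs hV h1 h2
  rw [hs0, hs1] at this
  refine this.trans (mul_le_mul_of_nonneg_right ?_ hV)
  have : ((Nat.find hy' : ℕ) : ℝ) ≤ n0 := by exact_mod_cast hle
  linarith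
end

section
/- Let I = [0,1]² be the unit square, a¹ = (1, 1) and a² = (1, 1/2). For every integer k ≥ 1, the ordered set l_k = ((1,0), (0,1), (1/2,0), (0,1/2), (1/4,0), (0,1/4), ..., (2^{−k},0), (0,2^{−k})) is an irreducible path in I with respect to a¹ and a², and its length is 2k + 2. -/
open Matrix Set Filter Topology

/-- The points of the path `l_k`:
`(1,0), (0,1), (1/2,0), (0,1/2), (1/4,0), (0,1/4), …`, i.e. the `2i`-th point is
`(2^{−i}, 0)` and the `(2i+1)`-st point is `(0, 2^{−i})`. -/
noncomputable def lkSeq : ℕ → (Fin 2 → ℝ) := fun i =>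
  if i % 2 = 0 then ![(1 / 2 : ℝ) ^ (i / 2), 0] else ![0, (1 / 2 : ℝ) ^ (i / 2)]

lemma lk_aux1 (l : ℕ) (q : ℕ → Fin 2 → ℝ)
    (h : IsPathFrom ![(1 : ℝ), 1] ![(1 : ℝ), 1 / 2] l q)
    (hX : ∀ i < l, q i ∈ Set.Icc (0 : Fin 2 → ℝ) 1) (h0 : q 0 = ![1, 0]) :
    ∀ n < l, (1 / 2 : ℝ) ^ (n / 2) ≤ q n 0 + q n 1 ∧
      (1 / 2 : ℝ) ^ ((n + 1) / 2) ≤ q n 0 + q n 1 / 2 := by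
  intro n
  induction n with
  | zero => intro _; simp [h0]
  | succ n ih =>
    intro hn
    obtain ⟨i1, i2⟩ := ih (by omega)
    obtain ⟨-, e1, e2⟩ := h n hn
    have hx := (hX (n + 1) hn).1 0
    have hy := (hX (n + 1) hn).1 1
    simp only [Pi.zero_apply] at hx hy
    simp only [dotProduct, Fin.sum_univ_two, Pi.sub_apply, Matrix.cons_val_zero,
      Matrix.cons_val_one] at e1 e2
    rcases Nat.mod_two_eq_zero_or_one n with hm | hm
    · have e := e1 hm
      rw [show (n + 1) / 2 = n / 2 by omega, show (n + 1 + 1) / 2 = n / 2 + 1 by omega, pow_succ]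
      constructor <;> linarith
    · have e := e2 hm
      rw [show (n + 1 + 1) / 2 = (n + 1) / 2 by omega]
      constructor <;> linarith

lemma lk_aux2 (l : ℕ) (q : ℕ → Fin 2 → ℝ)
    (h : IsPathFrom ![(1 : ℝ), 1 / 2] ![(1 : ℝ), 1] l q)
    (hX : ∀ i < l, q i ∈ Set.Icc (0 : Fin 2 → ℝ) 1) (h0 : q 0 = ![1, 0]) :
    ∀ n < l, (1 / 2 : ℝ) ^ (n / 2) ≤ q n 0 + q n 1 / 2 := by
  intro n
  induction n with
  | zero => intro _; simp [h0]
  | succ n ih =>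
    intro hn
    have i1 := ih (by omega)
    obtain ⟨-, e1, e2⟩ := h n hn
    have hx := (hX (n + 1) hn).1 0
    have hy := (hX (n + 1) hn).1 1
    have hy' := (hX n (by omega)).1 1
    simp only [Pi.zero_apply] at hx hy hy'
    simp only [dotProduct, Fin.sum_univ_two, Pi.sub_apply, Matrix.cons_val_zero,
      Matrix.cons_val_one] at e1 e2
    rcases Nat.mod_two_eq_zero_or_one n with hm | hm
    · have e := e1 hm
      rw [show (n + 1) / 2 = n / 2 by omega]
      linarith
    · have e := e2 hm
      rw [show (n + 1) / 2 = n / 2 + 1 by omega, pow_succ]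
      linarith


/-- in the unit square `I = [0,1]²`, with `a¹ = (1,1)` and
`a² = (1,1/2)`, for every `k ≥ 1` the ordered set
`l_k = ((1,0), (0,1), (1/2,0), (0,1/2), …, (2^{−k},0), (0,2^{−k}))`
is an irreducible path in `I` of length `2k + 2`. -/
theorem lk_is_irreducible_path (k : ℕ) (hk : 1 ≤ k) :
    IsIrreduciblePathIn ![(1 : ℝ), 1] ![(1 : ℝ), 1 / 2]
      (Set.Icc (0 : Fin 2 → ℝ) 1) (2 * k + 2) lkSeq := by

  have hpos : ∀ n : ℕ, (0 : ℝ) < (1 / 2 : ℝ) ^ n := fun n => by positivity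
  have hle : ∀ n : ℕ, (1 / 2 : ℝ) ^ n ≤ 1 := fun n =>
    pow_le_one₀ (by norm_num) (by norm_num)
  refine ⟨⟨by omega, Or.inl ?_, ?_⟩, ?_⟩
  · intro i _
    have hp := hpos (i / 2)
    rcases Nat.mod_two_eq_zero_or_one i with hm | hm
    · have e : lkSeq i = ![(1 / 2 : ℝ) ^ (i / 2), 0] := by simp [lkSeq, hm]
      have e' : lkSeq (i + 1) = ![0, (1 / 2 : ℝ) ^ (i / 2)] := by
        unfold lkSeq
        rw [if_neg (by omega), show (i + 1) / 2 = i / 2 by omega]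
      rw [e, e']
      refine ⟨fun h => ?_, fun _ => ?_, fun h => by omega⟩
      · have := congrFun h 1
        simp only [Pi.sub_apply, Pi.zero_apply, Matrix.cons_val_one, Matrix.cons_val_zero] at this
        linarith
      · simp only [dotProduct, Fin.sum_univ_two, Pi.sub_apply, Matrix.cons_val_zero,
          Matrix.cons_val_one]
        ring
    · have e : lkSeq i = ![0, (1 / 2 : ℝ) ^ (i / 2)] := by
        unfold lkSeq
        rw [if_neg (by omega)]
      have e' : lkSeq (i + 1) = ![(1 / 2 : ℝ) ^ (i / 2 + 1), 0] := by
        unfold lkSeq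
        rw [if_pos (by omega), show (i + 1) / 2 = i / 2 + 1 by omega]
      rw [e, e']
      refine ⟨fun h => ?_, fun h => by omega, fun _ => ?_⟩
      · have := congrFun h 1
        simp only [Pi.sub_apply, Pi.zero_apply, Matrix.cons_val_one, Matrix.cons_val_zero] at this
        linarith
      · simp only [dotProduct, Fin.sum_univ_two, Pi.sub_apply, Matrix.cons_val_zero,
          Matrix.cons_val_one]
        ring
  · intro i _
    have hp := (hpos (i / 2)).le
    have hl := hle (i / 2)
    unfold lkSeq
    split_ifs <;> constructor <;> intro j <;> fin_cases j <;>
      first | exact hp | exact hl | exact le_refl (0 : ℝ) | exact zero_le_one (α := ℝ)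
  · rintro ⟨l, q, hl, ⟨h1, hp, hX⟩, h0, hend⟩
    have e0 : q 0 = ![1, 0] := by rw [h0]; simp [lkSeq]
    have e1 : q (l - 1) = ![0, (1 / 2 : ℝ) ^ k] := by
      rw [hend]
      unfold lkSeq
      rw [if_neg (by omega), show (2 * k + 2 - 1) / 2 = k by omega]
    have key : (1 / 2 : ℝ) ^ k ≤ q (l - 1) 0 + q (l - 1) 1 / 2 := by
      rcases hp with hp | hp
      · refine le_trans ?_ (lk_aux1 l q hp hX e0 (l - 1) (by omega)).2
        exact pow_le_pow_of_le_one (by norm_num) (by norm_num) (by omega)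
      · refine le_trans ?_ (lk_aux2 l q hp hX e0 (l - 1) (by omega))
        exact pow_le_pow_of_le_one (by norm_num) (by norm_num) (by omega)
    rw [e1] at key
    simp only [Matrix.cons_val_zero, Matrix.cons_val_one] at key
    have := hpos k
    linarith
end

section
/- Let I = [0,1]² be the unit square, a¹ = (1, 1) and a² = (1, 1/2). For every integer k ≥ 1 there exists a continuous function g_k : ℝ → ℝ such that the function f_k(x) = g_k(a¹·x) on I satisfies sup_{t∈I} var_{{x∈I : a²·x = a²·t}} f_k ≤ 1 and sup_{t∈I} var_{O(t)} f_k = k. -/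
open Matrix Set Filter Topology

/-- Auxiliary truncation of `u` to `[(1/2)^k, 1]`. -/
noncomputable def hAux (k : ℕ) (u : ℝ) : ℝ := max ((1 / 2 : ℝ) ^ k) (min 1 u)

/-- The ridge profile: truncated binary logarithm. -/
noncomputable def gAux (k : ℕ) (u : ℝ) : ℝ := Real.logb 2 (hAux k u)

lemma hAux_pos (k : ℕ) (u : ℝ) : 0 < hAux k u :=
  lt_of_lt_of_le (by positivity) (le_max_left _ _)

lemma hAux_le (k : ℕ) (u : ℝ) : hAux k u ≤ 1 :=
  max_le (pow_le_one₀ (by norm_num) (by norm_num)) (min_le_left _ _)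

lemma gAux_cont (k : ℕ) : Continuous (gAux k) := by
  have h : Continuous (hAux k) := by unfold hAux; fun_prop
  unfold gAux Real.logb
  exact (h.log (fun x => (hAux_pos k x).ne')).div_const _

lemma logb_half_pow (k : ℕ) : Real.logb 2 ((1 / 2 : ℝ) ^ k) = -(k : ℝ) := by
  rw [Real.logb_pow, one_div, Real.logb_inv, Real.logb_self_eq_one (by norm_num)]; ring

lemma gAux_le (k : ℕ) (u : ℝ) : gAux k u ≤ 0 :=
  Real.logb_nonpos (by norm_num) (hAux_pos k u).le (hAux_le k u)

lemma le_gAux (k : ℕ) (u : ℝ) : -(k : ℝ) ≤ gAux k u := by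
  rw [← logb_half_pow]
  exact Real.logb_le_logb_of_le (by norm_num) (by positivity) (le_max_left _ _)

lemma gAux_double (k : ℕ) {u w : ℝ} (h : u ≤ 2 * w) : gAux k u ≤ 1 + gAux k w := by
  have h1 : hAux k u ≤ 2 * hAux k w := by
    have hc : (0 : ℝ) < (1 / 2 : ℝ) ^ k := by positivity
    unfold hAux
    refine max_le ?_ ?_
    · have := le_max_left ((1 / 2 : ℝ) ^ k) (min 1 w); linarith
    · have := le_max_right ((1 / 2 : ℝ) ^ k) (min 1 w)
      rcases min_choice 1 w with h2 | h2 <;> rw [h2] at this ⊢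
      · have := min_le_left 1 u; linarith
      · have := min_le_right 1 u; linarith
  have h2 := Real.logb_le_logb_of_le (b := 2) (by norm_num) (hAux_pos k u) h1
  rw [Real.logb_mul (by norm_num) (hAux_pos k w).ne', Real.logb_self_eq_one (by norm_num)] at h2
  exact h2

lemma varOn_le {n : ℕ} (f : (Fin n → ℝ) → ℝ) (Y : Set (Fin n → ℝ)) (c : ℝ) (hc : 0 ≤ c)
    (h : ∀ x ∈ Y, ∀ y ∈ Y, |f x - f y| ≤ c) : varOn f Y ≤ c := by
  refine Real.sSup_le ?_ hc
  rintro r ⟨x, hx, y, hy, rfl⟩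
  exact h x hx y hy

/-- The zigzag path towards the corner `0`. -/
noncomputable def pAux (i : ℕ) : Fin 2 → ℝ :=
  if i % 2 = 0 then ![0, (1 / 2) ^ (i / 2)] else ![(1 / 2) ^ (i / 2 + 1), 0]

lemma pAux_even (j : ℕ) : pAux (2 * j) = ![0, (1 / 2) ^ j] := by
  simp [pAux]

lemma pAux_odd (j : ℕ) : pAux (2 * j + 1) = ![(1 / 2) ^ (j + 1), 0] := by
  have h : (2 * j + 1) / 2 = j := by omega
  have h' : (2 * j + 1) % 2 = 1 := by omega
  simp only [pAux, h, h']; simp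

lemma pAux_mem (i : ℕ) : pAux i ∈ Set.Icc (0 : Fin 2 → ℝ) 1 := by
  have h : ∀ j : ℕ, (0 : ℝ) ≤ (1 / 2) ^ j ∧ ((1 : ℝ) / 2) ^ j ≤ 1 := fun j =>
    ⟨by positivity, pow_le_one₀ (by norm_num) (by norm_num)⟩
  rcases Nat.even_or_odd' i with ⟨j, rfl | rfl⟩
  · rw [pAux_even]
    constructor <;> intro a <;> fin_cases a
    exacts [le_refl _, (h j).1, zero_le_one, (h j).2]
  · rw [pAux_odd]
    constructor <;> intro a <;> fin_cases a
    exacts [(h _).1, le_refl _, (h _).2, zero_le_one]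

lemma pAux_path (m : ℕ) : IsPathFrom ![(1 : ℝ), 1 / 2] ![(1 : ℝ), 1] m pAux := by
  intro i _
  rcases Nat.even_or_odd' i with ⟨j, rfl | rfl⟩
  · rw [pAux_even, pAux_odd]
    refine ⟨fun h => ?_, fun _ => ?_, fun h => by omega⟩
    · have := congrFun h 0
      simp at this
    · simp [dotProduct_sub, pow_succ]; ring
  · rw [show 2 * j + 1 + 1 = 2 * (j + 1) by ring, pAux_even, pAux_odd]
    refine ⟨fun h => ?_, fun h => by omega, fun _ => ?_⟩
    · have := congrFun h 0
      simp at this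
    · simp [dotProduct_sub]

/-- on the unit square `I = [0,1]²` with `a¹ = (1,1)`,
`a² = (1,1/2)`, for every `k ≥ 1` there is a continuous `g_k : ℝ → ℝ` such that
`f_k(x) = g_k(a¹·x)` satisfies `sup_{t∈I} var_{π₂⁻¹(π₂(t))} f_k ≤ 1` and
`sup_{t∈I} var_{O(t)} f_k = k`. -/
theorem exists_gk_with_small_section_variation_and_large_orbit_variation
    (k : ℕ) (hk : 1 ≤ k) :
    ∃ g : ℝ → ℝ, Continuous g ∧
      sSup {r | ∃ t ∈ Set.Icc (0 : Fin 2 → ℝ) 1,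
          r = varOn (fun x => g (![(1 : ℝ), 1] ⬝ᵥ x))
            {x ∈ Set.Icc (0 : Fin 2 → ℝ) 1 |
              ![(1 : ℝ), 1 / 2] ⬝ᵥ x = ![(1 : ℝ), 1 / 2] ⬝ᵥ t}} ≤ 1 ∧
      sSup {r | ∃ t ∈ Set.Icc (0 : Fin 2 → ℝ) 1,
          r = varOn (fun x => g (![(1 : ℝ), 1] ⬝ᵥ x))
            (Orbit ![(1 : ℝ), 1] ![(1 : ℝ), 1 / 2] (Set.Icc (0 : Fin 2 → ℝ) 1) t)} =
        (k : ℝ) := by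
  have hbd : ∀ u w : ℝ, |gAux k u - gAux k w| ≤ (k : ℝ) := fun u w => by
    have h1 := gAux_le k u
    have h2 := gAux_le k w
    have h3 := le_gAux k u
    have h4 := le_gAux k w
    rw [abs_le]; constructor <;> linarith
  refine ⟨gAux k, gAux_cont k, ?_, ?_⟩
  · refine Real.sSup_le ?_ zero_le_one
    rintro r ⟨t, ht, rfl⟩
    refine varOn_le _ _ _ zero_le_one ?_
    rintro x ⟨⟨hx0, hx1⟩, hx⟩ y ⟨⟨hy0, hy1⟩, hy⟩
    have hxy := hx.trans hy.symm
    have a0 := hx0 0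
    have a1 := hx0 1
    have b0 := hy0 0
    have b1 := hy0 1
    simp only [Pi.zero_apply] at a0 a1 b0 b1
    simp [dotProduct, Fin.sum_univ_two] at hxy
    have e1 : ![(1 : ℝ), 1] ⬝ᵥ x = x 0 + x 1 := by simp [dotProduct, Fin.sum_univ_two]
    have e2 : ![(1 : ℝ), 1] ⬝ᵥ y = y 0 + y 1 := by simp [dotProduct, Fin.sum_univ_two]
    simp only [e1, e2]
    have h1 := gAux_double k (u := x 0 + x 1) (w := y 0 + y 1) (by linarith)
    have h2 := gAux_double k (u := y 0 + y 1) (w := x 0 + x 1) (by linarith)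
    rw [abs_le]; constructor <;> linarith
  · have hvar : ∀ Y : Set (Fin 2 → ℝ),
        varOn (fun x => gAux k (![(1 : ℝ), 1] ⬝ᵥ x)) Y ≤ k := fun Y =>
      varOn_le _ _ _ (Nat.cast_nonneg k) (fun x _ y _ => hbd _ _)
    apply le_antisymm
    · refine Real.sSup_le ?_ (Nat.cast_nonneg k)
      rintro r ⟨t, ht, rfl⟩
      exact hvar _
    · have hpath : IsPathIn ![(1 : ℝ), 1] ![(1 : ℝ), 1 / 2] (Set.Icc (0 : Fin 2 → ℝ) 1)
          (2 * k + 1) pAux :=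
        ⟨by omega, Or.inr (pAux_path _), fun i _ => pAux_mem i⟩
      refine le_trans ?_ (le_csSup ⟨(k : ℝ), ?_⟩ ⟨pAux (2 * 0), pAux_mem _, rfl⟩)
      · refine le_csSup ⟨(k : ℝ), ?_⟩
          ⟨pAux (2 * 0), ⟨2 * k + 1, pAux, hpath, ⟨2 * 0, by omega, rfl⟩, ⟨2 * 0, by omega, rfl⟩⟩,
            pAux (2 * k),
            ⟨2 * k + 1, pAux, hpath, ⟨2 * 0, by omega, rfl⟩, ⟨2 * k, by omega, rfl⟩⟩, ?_⟩
        · rintro r ⟨x, _, y, _, rfl⟩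
          exact hbd _ _
        · have hk1 : ((1 : ℝ) / 2) ^ k ≤ 1 := pow_le_one₀ (by norm_num) (by norm_num)
          have e1 : ![(1 : ℝ), 1] ⬝ᵥ pAux (2 * 0) = 1 := by
            rw [pAux_even]; simp [dotProduct, Fin.sum_univ_two]
          have e2 : ![(1 : ℝ), 1] ⬝ᵥ pAux (2 * k) = (1 / 2) ^ k := by
            rw [pAux_even]; simp [dotProduct, Fin.sum_univ_two]
          have g1 : gAux k 1 = 0 := by
            rw [gAux, hAux, min_self, max_eq_right hk1, Real.logb_one]
          have g2 : gAux k ((1 / 2) ^ k) = -(k : ℝ) := by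
            rw [gAux, hAux, min_eq_right hk1, max_self, logb_half_pow]
          simp only [e1, e2, g1, g2]
          simp
      · rintro r ⟨t, _, rfl⟩
        exact hvar _
end

section
/- Let I = [0,1]² be the unit square, a¹ = (1, 1) and a² = (1, 1/2). Then there is no positive real number c such that sup_{t∈I} var_{O(t)} f ≤ c · sup_{t∈I} var_{{x∈I : a²·x = a²·t}} f holds for all f ∈ R_c¹, i.e. for all continuous functions f on I of the form f(x) = g(a¹·x) with g : ℝ → ℝ. -/
open Matrix Set Filter Topology

theorem varAux_le_of_bdd {f : (Fin 2 → ℝ) → ℝ} {Y : Set (Fin 2 → ℝ)} {B : ℝ} (hB : 0 ≤ B)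
    (h : ∀ x ∈ Y, ∀ y ∈ Y, |f x - f y| ≤ B) : varOn f Y ≤ B := by
  apply Real.sSup_le _ hB
  rintro r ⟨x, hx, y, hy, rfl⟩
  exact h x hx y hy

theorem varAux_ge {f : (Fin 2 → ℝ) → ℝ} {Y : Set (Fin 2 → ℝ)} {B : ℝ}
    (h : ∀ x ∈ Y, ∀ y ∈ Y, |f x - f y| ≤ B) {x y : Fin 2 → ℝ} (hx : x ∈ Y) (hy : y ∈ Y) :
    |f x - f y| ≤ varOn f Y := by
  apply le_csSup
  · refine ⟨B, ?_⟩
    rintro r ⟨x, hx, y, hy, rfl⟩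
    exact h x hx y hy
  · exact ⟨x, hx, y, hy, rfl⟩

/-- The zigzag path converging to the origin. -/
noncomputable def zigzag (i : ℕ) : Fin 2 → ℝ :=
  if i % 2 = 0 then ![(1 / 2 : ℝ) ^ (i / 2), 0] else ![0, (1 / 2 : ℝ) ^ (i / 2)]

theorem zigzag_mem (i : ℕ) : zigzag i ∈ Set.Icc (0 : Fin 2 → ℝ) 1 := by
  have h0 : (0 : ℝ) ≤ (1 / 2 : ℝ) ^ (i / 2) := by positivity
  have h1 : (1 / 2 : ℝ) ^ (i / 2) ≤ 1 := pow_le_one₀ (by norm_num) (by norm_num)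
  unfold zigzag
  split_ifs <;> refine ⟨fun j => ?_, fun j => ?_⟩ <;> fin_cases j <;> simp <;>
    first | positivity | simpa using h1

theorem zigzag_path (m : ℕ) : IsPathFrom ![(1 : ℝ), 1] ![(1 : ℝ), 1 / 2] m zigzag := by
  intro i _
  have h0 : (0 : ℝ) < (1 / 2 : ℝ) ^ (i / 2) := by positivity
  rcases Nat.mod_two_eq_zero_or_one i with h | h
  · have e1 : (i + 1) % 2 = 1 := by omega
    have e2 : (i + 1) / 2 = i / 2 := by omega
    have d : zigzag (i + 1) - zigzag i = ![-(1 / 2 : ℝ) ^ (i / 2), (1 / 2 : ℝ) ^ (i / 2)] := by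
      ext j
      fin_cases j <;> simp [zigzag, h, e1, e2]
    rw [d]
    refine ⟨fun hh => ?_, fun _ => ?_, fun h' => by omega⟩
    · have := congrFun hh 1
      simp at this
    · simp [dotProduct, Fin.sum_univ_two]
  · have e1 : (i + 1) % 2 = 0 := by omega
    have e2 : (i + 1) / 2 = i / 2 + 1 := by omega
    have d : zigzag (i + 1) - zigzag i =
        ![(1 / 2 : ℝ) * (1 / 2 : ℝ) ^ (i / 2), -(1 / 2 : ℝ) ^ (i / 2)] := by
      ext j
      fin_cases j <;> simp [zigzag, h, e1, e2, pow_succ, mul_comm]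
    rw [d]
    refine ⟨fun hh => ?_, fun h' => by omega, fun _ => ?_⟩
    · have := congrFun hh 1
      simp at this
    · simp [dotProduct, Fin.sum_univ_two]

theorem log_max_step {e s t : ℝ} (he : 0 < e) (h : s ≤ 2 * t) :
    Real.log (max s e) - Real.log (max t e) ≤ Real.log 2 := by
  have hs : 0 < max s e := lt_max_of_lt_right he
  have ht : 0 < max t e := lt_max_of_lt_right he
  have : Real.log (max s e) ≤ Real.log (2 * max t e) := by
    apply Real.log_le_log hs
    apply max_le
    · linarith [le_max_left t e]
    · linarith [le_max_right t e]
  rw [Real.log_mul (by norm_num) ht.ne'] at this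
  linarith

theorem sq_coords {x : Fin 2 → ℝ} (hx : x ∈ Set.Icc (0 : Fin 2 → ℝ) 1) :
    0 ≤ x 0 ∧ 0 ≤ x 1 ∧ x 0 ≤ 1 ∧ x 1 ≤ 1 :=
  ⟨hx.1 0, hx.1 1, hx.2 0, hx.2 1⟩

/-- on the unit square `I = [0,1]²` with `a¹ = (1,1)`,
`a² = (1,1/2)`, there is no `c > 0` such that
`sup_{t∈I} var_{O(t)} f ≤ c · sup_{t∈I} var_{π₂⁻¹(π₂(t))} f` for all continuous
functions `f` on `I` of the form `f(x) = g(a¹·x)`. -/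
theorem no_orbit_variation_bound_on_unit_square :
    ¬ ∃ c : ℝ, 0 < c ∧
      ∀ (g : ℝ → ℝ) (f : (Fin 2 → ℝ) → ℝ),
        (∀ x ∈ Set.Icc (0 : Fin 2 → ℝ) 1, f x = g (![(1 : ℝ), 1] ⬝ᵥ x)) →
        ContinuousOn f (Set.Icc (0 : Fin 2 → ℝ) 1) →
        sSup {r | ∃ t ∈ Set.Icc (0 : Fin 2 → ℝ) 1,
            r = varOn f (Orbit ![(1 : ℝ), 1] ![(1 : ℝ), 1 / 2]
              (Set.Icc (0 : Fin 2 → ℝ) 1) t)} ≤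
          c * sSup {r | ∃ t ∈ Set.Icc (0 : Fin 2 → ℝ) 1,
            r = varOn f {x ∈ Set.Icc (0 : Fin 2 → ℝ) 1 |
              ![(1 : ℝ), 1 / 2] ⬝ᵥ x = ![(1 : ℝ), 1 / 2] ⬝ᵥ t}} := by
  rintro ⟨c, hc, H⟩
  obtain ⟨n, hn⟩ := exists_nat_gt c
  have hl2 : 0 < Real.log 2 := Real.log_pos (by norm_num)
  set e : ℝ := (1 / 2 : ℝ) ^ n with he_def
  have he : 0 < e := by positivity
  have he1 : e ≤ 1 := pow_le_one₀ (by norm_num) (by norm_num)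
  have hloge : Real.log e = -(n * Real.log 2) := by
    rw [he_def, Real.log_pow, one_div, Real.log_inv]
    ring
  set f : (Fin 2 → ℝ) → ℝ := fun x => Real.log (max (x 0 + x 1) e) with hf
  have hcont : Continuous f := by
    have h1 : Continuous fun x : Fin 2 → ℝ => max (x 0 + x 1) e := by fun_prop
    exact h1.log fun x => (lt_max_of_lt_right he).ne'
  have key := H (fun s => Real.log (max s e)) f
    (fun x _ => by simp [hf, dotProduct, Fin.sum_univ_two]) hcont.continuousOn
  -- global bound
  set B : ℝ := Real.log 2 - Real.log e with hB
  have hB0 : 0 ≤ B := by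
    rw [hB]
    linarith [Real.log_nonpos he.le he1]
  have hrange : ∀ x ∈ Set.Icc (0 : Fin 2 → ℝ) 1, Real.log e ≤ f x ∧ f x ≤ Real.log 2 := by
    intro x hx
    obtain ⟨h0, h1, h2, h3⟩ := sq_coords hx
    exact ⟨Real.log_le_log he (le_max_right _ _),
      Real.log_le_log (lt_max_of_lt_right he) (max_le (by linarith) (by linarith))⟩
  have hbd : ∀ x ∈ Set.Icc (0 : Fin 2 → ℝ) 1, ∀ y ∈ Set.Icc (0 : Fin 2 → ℝ) 1,
      |f x - f y| ≤ B := by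
    intro x hx y hy
    have h1 := hrange x hx
    have h2 := hrange y hy
    rw [abs_le]
    constructor <;> linarith [h1.1, h1.2, h2.1, h2.2]
  have horb : ∀ t, ∀ x ∈ Orbit ![(1 : ℝ), 1] ![(1 : ℝ), 1 / 2] (Set.Icc (0 : Fin 2 → ℝ) 1) t,
      x ∈ Set.Icc (0 : Fin 2 → ℝ) 1 := by
    rintro t x ⟨m, p, hp, _, j, hj, rfl⟩
    exact hp.2.2 j hj
  have hbdo : ∀ t, ∀ x ∈ Orbit ![(1 : ℝ), 1] ![(1 : ℝ), 1 / 2] (Set.Icc (0 : Fin 2 → ℝ) 1) t,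
      ∀ y ∈ Orbit ![(1 : ℝ), 1] ![(1 : ℝ), 1 / 2] (Set.Icc (0 : Fin 2 → ℝ) 1) t,
      |f x - f y| ≤ B :=
    fun t x hx y hy => hbd x (horb t x hx) y (horb t y hy)
  have hmem : ∀ k ≤ 2 * n, zigzag k ∈
      Orbit ![(1 : ℝ), 1] ![(1 : ℝ), 1 / 2] (Set.Icc (0 : Fin 2 → ℝ) 1) (zigzag 0) :=
    fun k hk => ⟨2 * n + 1, zigzag, ⟨by omega, Or.inl (zigzag_path _), fun i _ => zigzag_mem i⟩,
      ⟨0, by omega, rfl⟩, ⟨k, by omega, rfl⟩⟩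
  have hv := varAux_ge (hbdo (zigzag 0)) (hmem 0 (by omega)) (hmem (2 * n) le_rfl)
  have hf0 : f (zigzag 0) = 0 := by
    simp [hf, zigzag, max_eq_left he1]
  have hfn : f (zigzag (2 * n)) = Real.log e := by
    have : (2 * n) / 2 = n := by omega
    simp only [hf, zigzag, Nat.mul_mod_right, if_true, this]
    simp [he_def]
  rw [hf0, hfn, hloge, zero_sub, neg_neg, abs_of_nonneg (by positivity)] at hv
  have hleft : (n : ℝ) * Real.log 2 ≤ sSup {r | ∃ t ∈ Set.Icc (0 : Fin 2 → ℝ) 1,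
            r = varOn f (Orbit ![(1 : ℝ), 1] ![(1 : ℝ), 1 / 2]
              (Set.Icc (0 : Fin 2 → ℝ) 1) t)} := by
    refine hv.trans (le_csSup ⟨B, ?_⟩ ⟨zigzag 0, zigzag_mem 0, rfl⟩)
    rintro r ⟨t, _, rfl⟩
    exact varAux_le_of_bdd hB0 (hbdo t)
  have hright : sSup {r | ∃ t ∈ Set.Icc (0 : Fin 2 → ℝ) 1,
            r = varOn f {x ∈ Set.Icc (0 : Fin 2 → ℝ) 1 |
              ![(1 : ℝ), 1 / 2] ⬝ᵥ x = ![(1 : ℝ), 1 / 2] ⬝ᵥ t}} ≤ Real.log 2 := by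
    apply Real.sSup_le _ hl2.le
    rintro r ⟨t, _, rfl⟩
    apply varAux_le_of_bdd hl2.le
    rintro x ⟨hx, hxt⟩ y ⟨hy, hyt⟩
    have hxy := hxt.trans hyt.symm
    simp only [dotProduct, Fin.sum_univ_two, Matrix.cons_val_zero, Matrix.cons_val_one] at hxy
    obtain ⟨h0, h1, h2, h3⟩ := sq_coords hx
    obtain ⟨k0, k1, k2, k3⟩ := sq_coords hy
    have a := log_max_step (s := x 0 + x 1) (t := y 0 + y 1) he (by linarith)
    have b := log_max_step (s := y 0 + y 1) (t := x 0 + x 1) he (by linarith)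
    rw [abs_le]
    constructor
    · simp only [hf]
      linarith
    · exact a
  have h1 := hleft.trans (key.trans (mul_le_mul_of_nonneg_left hright hc.le))
  have h2 := mul_lt_mul_of_pos_right hn hl2
  linarith
end

section
/- Let I = [0,1]² be the unit square, a¹ = (1, 1) and a² = (1, 1/2). Then R_c(I) is not proximinal in C(I); that is, there exists f ∈ C(I) having no extremal element in R_c(I). -/
open Matrix Set Filter Topology

/-- the slowly varying unbounded function. -/
noncomputable def hh (t : ℝ) : ℝ := Real.log (2 - Real.log t)

/-- the bad function. -/
noncomputable def ff (x : Fin 2 → ℝ) : ℝ := hh (x 0 + x 1) - hh (x 0 + x 1 / 2)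

/-- the approximants. -/
noncomputable def fd (d : ℝ) (x : Fin 2 → ℝ) : ℝ :=
  hh (max (x 0 + x 1) d) - hh (max (x 0 + x 1 / 2) d)

lemma log_le_one_of {t : ℝ} (h0 : 0 < t) (h : t ≤ 2) : Real.log t ≤ 1 := by
  have := Real.log_le_sub_one_of_pos h0
  linarith

lemma hh_est {u v w : ℝ} (hv : 0 < v) (hvu : v ≤ u) (huv : u ≤ 2 * v) (huw : u ≤ w)
    (hw : w ≤ 2) : |hh u - hh v| ≤ 1 / (2 - Real.log w) := by
  have hu : 0 < u := hv.trans_le hvu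
  have hu2 : u ≤ 2 := huw.trans hw
  have a1 : Real.log v ≤ Real.log u := Real.log_le_log hv hvu
  have a2 : Real.log u ≤ Real.log 2 + Real.log v := by
    rw [← Real.log_mul (by norm_num) hv.ne']
    exact Real.log_le_log hu huv
  have a3 : Real.log (2 : ℝ) ≤ 1 := log_le_one_of (by norm_num) le_rfl
  have a4 : Real.log u ≤ 1 := log_le_one_of hu hu2
  have a5 : Real.log u ≤ Real.log w := Real.log_le_log hu huw
  have a6 : Real.log w ≤ 1 := log_le_one_of (hu.trans_le huw) hw
  have a7 : 0 < 2 - Real.log u := by linarith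
  have a8 : 0 < 2 - Real.log v := by linarith
  have a9 : 0 < 2 - Real.log w := by linarith
  have b1 : hh u ≤ hh v := Real.log_le_log a7 (by linarith)
  rw [abs_sub_comm, abs_of_nonneg (by linarith)]
  unfold hh
  rw [← Real.log_div a8.ne' a7.ne']
  have b2 := Real.log_le_sub_one_of_pos (div_pos a8 a7)
  have b3 : (2 - Real.log v) / (2 - Real.log u) - 1
      = (Real.log u - Real.log v) / (2 - Real.log u) := by
    field_simp; ring
  have b4 : (Real.log u - Real.log v) / (2 - Real.log u) ≤ 1 / (2 - Real.log w) :=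
    div_le_div₀ (by norm_num) (by linarith) a9 (by linarith)
  linarith

lemma approx_ff (ε : ℝ) (hε : 0 < ε) :
    ∃ d : ℝ, 0 < d ∧ ∀ x ∈ Set.Icc (0 : Fin 2 → ℝ) 1, |ff x - fd d x| ≤ ε := by
  -- choose d
  set w : ℝ := Real.exp (-(2 / ε)) with hw
  have hw0 : 0 < w := Real.exp_pos _
  have hw1 : w ≤ 1 := by
    rw [hw, Real.exp_le_one_iff]
    have : 0 < 2 / ε := by positivity
    linarith
  have hlog : 1 / (2 - Real.log w) ≤ ε / 2 := by
    rw [hw, Real.log_exp]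
    have : 0 < 2 / ε := by positivity
    calc 1 / (2 - -(2 / ε)) ≤ 1 / (2 / ε) := by
          apply one_div_le_one_div_of_le this; linarith
      _ = ε / 2 := by field_simp
  refine ⟨w / 2, by positivity, fun x hx => ?_⟩
  have x0 : 0 ≤ x 0 := hx.1 0
  have x1 : 0 ≤ x 1 := hx.1 1
  unfold ff fd
  set u := x 0 + x 1 with hu
  set v := x 0 + x 1 / 2 with hv
  have hvu : v ≤ u := by linarith
  have huv : u ≤ 2 * v := by linarith
  have hv0 : 0 ≤ v := by linarith
  by_cases hvd : w / 2 ≤ v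
  · rw [max_eq_left hvd, max_eq_left (hvd.trans hvu)]
    simpa using hε.le
  · push Not at hvd
    rw [max_eq_right hvd.le]
    have e2 : |hh (max u (w / 2)) - hh (w / 2)| ≤ 1 / (2 - Real.log w) :=
      hh_est (by positivity) (le_max_right _ _) (max_le (by linarith) (by linarith))
        (max_le (by linarith) (by linarith)) (by linarith)
    have e1 : |hh u - hh v| ≤ ε / 2 := by
      rcases hv0.eq_or_lt with h | h
      · have : u = v := by linarith
        rw [this, sub_self, abs_zero]; positivity
      · exact (hh_est h hvu huv (by linarith) (by linarith)).trans hlog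
    calc _ ≤ |hh u - hh v| + |hh (max u (w / 2)) - hh (w / 2)| := abs_sub _ _
      _ ≤ ε := by linarith

lemma hh_cont {d : ℝ} (hd : 0 < d) {g : (Fin 2 → ℝ) → ℝ} (hg : Continuous g)
    (hg2 : ∀ x ∈ Set.Icc (0 : Fin 2 → ℝ) 1, g x ≤ 2) (hd2 : d ≤ 2) :
    ContinuousOn (fun x => hh (max (g x) d)) (Set.Icc (0 : Fin 2 → ℝ) 1) := by
  unfold hh
  refine ContinuousOn.log (continuousOn_const.sub (ContinuousOn.log
    (hg.max continuous_const).continuousOn ?_)) ?_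
  · intro x _
    exact (lt_max_of_lt_right hd).ne'
  · intro x hx
    have := log_le_one_of (lt_max_of_lt_right hd : 0 < max (g x) d) (max_le (hg2 x hx) hd2)
    linarith

lemma approx_ff' (ε : ℝ) (hε : 0 < ε) :
    ∃ d : ℝ, 0 < d ∧ d ≤ 2 ∧ ∀ x ∈ Set.Icc (0 : Fin 2 → ℝ) 1, |ff x - fd d x| ≤ ε := by
  obtain ⟨d, hd, h⟩ := approx_ff ε hε
  by_cases h2 : d ≤ 2
  · exact ⟨d, hd, h2, h⟩
  · refine ⟨2, by norm_num, le_rfl, fun x hx => ?_⟩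
    have x0 : x 0 ≤ 1 := hx.2 0
    have x1 : x 1 ≤ 1 := hx.2 1
    have y1 : 0 ≤ x 1 := hx.1 1
    have := h x hx
    unfold fd at this ⊢
    rw [max_eq_right (by linarith), max_eq_right (by linarith)] at this ⊢
    simpa using this

lemma cont1 {d : ℝ} (hd : 0 < d) (hd2 : d ≤ 2) :
    ContinuousOn (fun x : Fin 2 → ℝ => hh (max (x 0 + x 1) d)) (Set.Icc (0 : Fin 2 → ℝ) 1) := by
  refine hh_cont hd (by fun_prop) (fun x hx => ?_) hd2
  have x0 : x 0 ≤ 1 := hx.2 0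
  have x1 : x 1 ≤ 1 := hx.2 1
  linarith

lemma cont2 {d : ℝ} (hd : 0 < d) (hd2 : d ≤ 2) :
    ContinuousOn (fun x : Fin 2 → ℝ => hh (max (x 0 + x 1 / 2) d))
      (Set.Icc (0 : Fin 2 → ℝ) 1) := by
  refine hh_cont hd (by fun_prop) (fun x hx => ?_) hd2
  have x0 : x 0 ≤ 1 := hx.2 0
  have x1 : x 1 ≤ 1 := hx.2 1
  linarith

lemma ff_cont : ContinuousOn ff (Set.Icc (0 : Fin 2 → ℝ) 1) := by
  refine Metric.continuousOn_iff.2 ?_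
  refine Metric.continuousOn_iff.1 (continuousOn_of_uniform_approx_of_continuousOn ?_)
  intro s hs
  obtain ⟨ε, hε, hs⟩ := Metric.mem_uniformity_dist.1 hs
  obtain ⟨d, hd, hd2, h⟩ := approx_ff' (ε / 2) (by positivity)
  refine ⟨fd d, (cont1 hd hd2).sub (cont2 hd hd2), fun x hx => hs ?_⟩
  rw [Real.dist_eq]
  linarith [h x hx]

lemma dot1 (x : Fin 2 → ℝ) : ![(1 : ℝ), 1] ⬝ᵥ x = x 0 + x 1 := by
  simp [dotProduct, Fin.sum_univ_two]

lemma dot2 (x : Fin 2 → ℝ) : ![(1 : ℝ), 1 / 2] ⬝ᵥ x = x 0 + x 1 / 2 := by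
  simp [dotProduct, Fin.sum_univ_two]; ring

lemma not_rep (g1 g2 : ℝ → ℝ)
    (h : ∀ x ∈ Set.Icc (0 : Fin 2 → ℝ) 1, ff x = g1 (x 0 + x 1) + g2 (x 0 + x 1 / 2))
    (hc : ContinuousOn (fun x : Fin 2 → ℝ => g2 (x 0 + x 1 / 2)) (Set.Icc (0 : Fin 2 → ℝ) 1)) :
    False := by
  have mem : ∀ a b : ℝ, 0 ≤ a → a ≤ 1 → 0 ≤ b → b ≤ 1 →
      (![a, b] : Fin 2 → ℝ) ∈ Set.Icc (0 : Fin 2 → ℝ) 1 := by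
    intro a b h1 h2 h3 h4
    constructor <;> intro i <;> fin_cases i <;> simpa
  have step : ∀ t : ℝ, 0 ≤ t → t ≤ 1 → g2 (t / 2) + hh (t / 2) = g2 t + hh t := by
    intro t h0 h1
    have e1 := h _ (mem t 0 h0 h1 le_rfl zero_le_one)
    have e2 := h _ (mem 0 t le_rfl zero_le_one h0 h1)
    simp [ff] at e1 e2
    linarith
  have all : ∀ n : ℕ, g2 ((1 / 2) ^ n) + hh ((1 / 2) ^ n) = g2 1 + hh 1 := by
    intro n
    induction n with
    | zero => simp
    | succ k ih =>
      rw [← ih, ← step ((1 / 2) ^ k) (by positivity) (pow_le_one₀ (by norm_num) (by norm_num)),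
        pow_succ]
      congr 2 <;> ring_nf
  obtain ⟨C, hC⟩ := isCompact_Icc.exists_bound_of_continuousOn hc
  have bd : ∀ n : ℕ, hh ((1 / 2) ^ n) ≤ g2 1 + hh 1 + C := by
    intro n
    have := hC _ (mem ((1 / 2) ^ n) 0 (by positivity)
      (pow_le_one₀ (by norm_num) (by norm_num)) le_rfl zero_le_one)
    simp only [Matrix.cons_val_zero, Matrix.cons_val_one, zero_div, add_zero,
      Real.norm_eq_abs] at this
    have := (abs_le.1 this).1
    linarith [all n]
  have lim : Tendsto (fun n : ℕ => hh ((1 / 2) ^ n)) atTop atTop := by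
    have e : (fun n : ℕ => hh ((1 / 2) ^ n))
        = fun n : ℕ => Real.log (2 + (n : ℝ) * Real.log 2) := by
      funext n
      simp [hh, Real.log_pow, Real.log_inv]
    rw [e]
    refine Real.tendsto_log_atTop.comp (tendsto_atTop_add_const_left _ _ ?_)
    exact tendsto_natCast_atTop_atTop.atTop_mul_const (Real.log_pos (by norm_num))
  obtain ⟨n, hn⟩ := (lim.eventually_gt_atTop (g2 1 + hh 1 + C)).exists
  linarith [bd n]

/-- the space `R_c(I)` with the directions `a¹ = (1,1)` and
`a² = (1,1/2)` is not proximinal in `C(I)`, where `I = [0,1]²`: some continuous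
function on `I` has no extremal element in `R_c(I)`. -/
theorem Rc_not_proximinal_on_unit_square :
    ∃ f : (Fin 2 → ℝ) → ℝ, ContinuousOn f (Set.Icc (0 : Fin 2 → ℝ) 1) ∧
      ¬ HasExtremalIn (Set.Icc (0 : Fin 2 → ℝ) 1) f
          (RcSet ![(1 : ℝ), 1] ![(1 : ℝ), 1 / 2] (Set.Icc (0 : Fin 2 → ℝ) 1)) := by
  refine ⟨ff, ff_cont, ?_⟩
  rintro ⟨g0, ⟨g1, g2, hg, hc1, hc2⟩, heq⟩
  simp only [dot1, dot2] at hg hc1 hc2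
  have nonneg : ∀ g : (Fin 2 → ℝ) → ℝ, 0 ≤ supDist (Set.Icc (0 : Fin 2 → ℝ) 1) ff g := by
    intro g
    apply Real.sSup_nonneg
    rintro r ⟨x, _, rfl⟩
    exact abs_nonneg _
  have hle : supDist (Set.Icc (0 : Fin 2 → ℝ) 1) ff g0 ≤ 0 := by
    refine le_of_forall_pos_le_add fun ε hε => ?_
    obtain ⟨d, hd, hd2, h⟩ := approx_ff' ε hε
    rw [heq, zero_add]
    have hmem : fd d ∈ RcSet ![(1 : ℝ), 1] ![(1 : ℝ), 1 / 2] (Set.Icc (0 : Fin 2 → ℝ) 1) := by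
      refine ⟨fun t => hh (max t d), fun t => - hh (max t d), ?_, ?_, ?_⟩
      · intro x _
        simp only [dot1, dot2, fd]
        ring
      · simp only [dot1]; exact cont1 hd hd2
      · simp only [dot2]; exact (cont2 hd hd2).neg
    refine (csInf_le ⟨0, ?_⟩ (Set.mem_image_of_mem _ hmem)).trans ?_
    · rintro _ ⟨g, _, rfl⟩
      exact nonneg g
    · apply Real.sSup_le _ hε.le
      rintro r ⟨x, hx, rfl⟩
      exact h x hx
  have hcont : ContinuousOn (fun x => ff x - g0 x) (Set.Icc (0 : Fin 2 → ℝ) 1) :=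
    ff_cont.sub ((hc1.add hc2).congr hg)
  obtain ⟨C, hC⟩ := isCompact_Icc.exists_bound_of_continuousOn hcont
  refine not_rep g1 g2 (fun x hx => ?_) hc2
  rw [← hg x hx]
  have h1 : |ff x - g0 x| ≤ supDist (Set.Icc (0 : Fin 2 → ℝ) 1) ff g0 := by
    apply le_csSup
    · refine ⟨C, ?_⟩
      rintro r ⟨y, hy, rfl⟩
      exact hC y hy
    · exact ⟨x, hx, rfl⟩
  have h2 := abs_nonpos_iff.1 (h1.trans hle)
  linarith
end

section
/- Let a¹ and a² be two fixed distinct directions in ℝⁿ. For every subset X of ℝⁿ, the space R_a(X) is proximinal in B(X); that is, every f ∈ B(X) has an extremal element in R_a(X). -/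
open Matrix Set Filter Topology

/-- Uniform boundedness of a real sequence. -/
def SeqBdd (u : ℕ → ℝ) : Prop := ∃ C, ∀ k, |u k| ≤ C

theorem SeqBdd.sub {u v : ℕ → ℝ} (hu : SeqBdd u) (hv : SeqBdd v) :
    SeqBdd (fun k => u k - v k) := by
  obtain ⟨C, hC⟩ := hu
  obtain ⟨D, hD⟩ := hv
  exact ⟨C + D, fun k => (abs_sub _ _).trans (add_le_add (hC k) (hD k))⟩

theorem SeqBdd.exists_lim {u : ℕ → ℝ} (hu : SeqBdd u) :
    ∃ l, Tendsto u (hyperfilter ℕ : Filter ℕ) (𝓝 l) := by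
  obtain ⟨C, hC⟩ := hu
  have h := (isCompact_Icc (a := -C) (b := C)).ultrafilter_le_nhds'
    ((hyperfilter ℕ).map u) (by
      rw [Ultrafilter.mem_map]
      exact Filter.univ_mem' (fun k => abs_le.mp (hC k)))
  obtain ⟨l, -, hl⟩ := h
  exact ⟨l, hl⟩

/-- Two points are related when the difference of the sequences is bounded. -/
def bddSetoid (g : ℕ → ℝ → ℝ) : Setoid ℝ where
  r s t := SeqBdd (fun k => g k s - g k t)
  iseqv := by
    refine ⟨fun s => ⟨0, by simp⟩, ?_, ?_⟩
    · rintro s t ⟨C, hC⟩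
      exact ⟨C, fun k => by rw [abs_sub_comm]; exact hC k⟩
    · rintro s t w ⟨C, hC⟩ ⟨D, hD⟩
      exact ⟨C + D, fun k => (abs_sub_le _ (g k t) _).trans (add_le_add (hC k) (hD k))⟩

theorem exists_limit_pair (g h : ℕ → ℝ → ℝ) :
    ∃ G H : ℝ → ℝ, ∀ s t, SeqBdd (fun k => g k s + h k t) →
      Tendsto (fun k => g k s + h k t) (hyperfilter ℕ : Filter ℕ) (𝓝 (G s + H t)) := by
  classical
  let S := bddSetoid g
  let r : ℝ → ℝ := fun s => (Quotient.mk S s).out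
  have hr : ∀ s, SeqBdd (fun k => g k s - g k (r s)) := fun s =>
    S.symm (Quotient.mk_out (s := S) s)
  have hrr : ∀ s s', SeqBdd (fun k => g k s - g k s') → r s = r s' := by
    intro s s' hs
    have : Quotient.mk S s = Quotient.mk S s' := Quotient.sound (s := S) hs
    simp only [r, this]
  have h1 : ∀ s, ∃ l, Tendsto (fun k => g k s - g k (r s)) (hyperfilter ℕ : Filter ℕ) (𝓝 l) :=
    fun s => (hr s).exists_lim
  have h2 : ∀ t, ∃ l, ∀ s, SeqBdd (fun k => g k s + h k t) →
      Tendsto (fun k => g k (r s) + h k t) (hyperfilter ℕ : Filter ℕ) (𝓝 l) := by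
    intro t
    by_cases ht : ∃ s, SeqBdd (fun k => g k s + h k t)
    · obtain ⟨s, hs⟩ := ht
      have hb : SeqBdd (fun k => g k (r s) + h k t) := by
        have := hs.sub (hr s)
        convert this using 2
        ring
      obtain ⟨l, hl⟩ := hb.exists_lim
      refine ⟨l, fun s' hs' => ?_⟩
      have : r s' = r s := by
        apply hrr
        have := hs'.sub hs
        convert this using 2
        ring
      rw [this]
      exact hl
    · exact ⟨0, fun s hs => absurd ⟨s, hs⟩ ht⟩
  choose G hG using h1
  choose H hH using h2
  refine ⟨G, H, fun s t hst => ?_⟩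
  have := (hG s).add (hH t s hst)
  refine this.congr (fun k => ?_)
  ring

/-- from Theorem 1 of Garkavi–Medvedev–Khavinson: for any subset
`X` of `ℝⁿ` and distinct nonzero directions `a¹, a²`, the space `R_a(X)` of bounded
sums of two ridge functions is proximinal in `B(X)`: every bounded function on `X`
has an extremal element in `R_a(X)`. -/
theorem proximinality_of_Ra
    {n : ℕ} (a1 a2 : Fin n → ℝ) (ha1 : a1 ≠ 0) (ha2 : a2 ≠ 0) (hne : a1 ≠ a2)
    (X : Set (Fin n → ℝ))
    (f : (Fin n → ℝ) → ℝ) (hf : BddOn f X) :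
    HasExtremalIn X f (RaSet a1 a2 X) := by
  classical
  obtain ⟨M, hM⟩ := hf
  have hnn : ∀ g, 0 ≤ supDist X f g := by
    intro g
    apply Real.sSup_nonneg
    rintro r ⟨x, -, rfl⟩
    exact abs_nonneg _
  have hne' : ((supDist X f) '' (RaSet a1 a2 X)).Nonempty :=
    ⟨_, fun _ => 0, ⟨⟨fun _ => 0, fun _ => 0, by simp⟩, 0, by simp⟩, rfl⟩
  have hbdd : BddBelow ((supDist X f) '' (RaSet a1 a2 X)) := by
    refine ⟨0, ?_⟩
    rintro _ ⟨g, -, rfl⟩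
    exact hnn g
  set d := sInf ((supDist X f) '' (RaSet a1 a2 X)) with hd
  have hd0 : 0 ≤ d := le_csInf hne' (by rintro _ ⟨g, -, rfl⟩; exact hnn g)
  have hseq : ∀ k : ℕ, ∃ g h : ℝ → ℝ, ∀ x ∈ X,
      |f x - (g (a1 ⬝ᵥ x) + h (a2 ⬝ᵥ x))| ≤ d + 1 / ((k : ℝ) + 1) := by
    intro k
    have hk : (0 : ℝ) < 1 / ((k : ℝ) + 1) := by positivity
    obtain ⟨_, ⟨F, ⟨⟨g, h, hF⟩, C, hC⟩, rfl⟩, hlt⟩ :=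
      exists_lt_of_csInf_lt hne' (show d < d + 1 / ((k : ℝ) + 1) by linarith)
    refine ⟨g, h, fun x hx => ?_⟩
    rw [← hF x hx]
    have hle : |f x - F x| ≤ supDist X f F := by
      refine le_csSup ⟨M + C, ?_⟩ ⟨x, hx, rfl⟩
      rintro _ ⟨y, hy, rfl⟩
      exact (abs_sub _ _).trans (add_le_add (hM y hy) (hC y hy))
    exact hle.trans hlt.le
  choose g h hgh using hseq
  obtain ⟨G, H, hGH⟩ := exists_limit_pair g h
  have key : ∀ x ∈ X, |f x - (G (a1 ⬝ᵥ x) + H (a2 ⬝ᵥ x))| ≤ d := by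
    intro x hx
    have hb : SeqBdd (fun k => g k (a1 ⬝ᵥ x) + h k (a2 ⬝ᵥ x)) := by
      refine ⟨M + (d + 1), fun k => ?_⟩
      have h1 := hgh k x hx
      have h2 := hM x hx
      have h3 : 1 / ((k : ℝ) + 1) ≤ 1 := by
        rw [div_le_one (by positivity)]
        have : (0 : ℝ) ≤ k := Nat.cast_nonneg k
        linarith
      rw [abs_le] at *
      constructor <;> linarith [h1.1, h1.2, h2.1, h2.2]
    have hl := ((hGH _ _ hb).const_sub (f x)).abs
    have hr : Tendsto (fun k : ℕ => d + 1 / ((k : ℝ) + 1)) (hyperfilter ℕ : Filter ℕ)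
        (𝓝 (d + 0)) :=
      (tendsto_const_nhds.add tendsto_one_div_add_atTop_nhds_zero_nat).mono_left
        Nat.hyperfilter_le_atTop
    rw [add_zero] at hr
    exact le_of_tendsto_of_tendsto' hl hr (fun k => hgh k x hx)
  have hmem : (fun x => G (a1 ⬝ᵥ x) + H (a2 ⬝ᵥ x)) ∈ RaSet a1 a2 X := by
    refine ⟨⟨G, H, fun x _ => rfl⟩, M + d, fun x hx => ?_⟩
    have h1 := key x hx
    have h2 := hM x hx
    rw [abs_le] at *
    constructor <;> linarith [h1.1, h1.2, h2.1, h2.2]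
  refine ⟨_, hmem, le_antisymm ?_ (csInf_le hbdd ⟨_, hmem, rfl⟩)⟩
  apply Real.sSup_le _ hd0
  rintro _ ⟨x, hx, rfl⟩
  exact key x hx
end
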